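/- arXiv:2005.03548 — 2 statements merged into one kernel-verified Lean document; each statement's English description precedes it below -/
import Mathlib

section
/- For every d ≥ 1 and r ∈ (1,∞), with r' = r/(r−1), there is a constant C = C(d,r) ≥ 1 such that for every locally integrable b : ℝ^d → ℂ: (i) for every sparse collection 𝒮 of cubes in ℝ^d and all nonnegative numbers (λ_S)_{S∈𝒮} with Σ_{S∈𝒮}|S|·λ_S^{r'} ≤ 1 one has Σ_{S∈𝒮} λ_S ∫_S |b − ⟨b⟩_S| ≤ C·‖b‖_{∙L^r(ℝ^d)}; and (ii) ‖b‖_{∙L^r(ℝ^d)} ≤ C · sup{ Σ_{S∈𝒮} λ_S ∫_S |b − ⟨b⟩_S| : 𝒮 sparse, λ_S ≥ 0, Σ_{S∈𝒮}|S|·λ_S^{r'} ≤ 1 }, both sides possibly +∞. -/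
/-!
The two inequalities rest on a Carleson embedding and on sparse domination.

*Carleson embedding* (`carleson`). For a sparse family and `p > 1`,
`∑ |Q| ⟨g⟩_Q ^ p ≤ C ∫ g ^ p`: replace `|Q|` by `2 |E(Q)|`, bound `⟨g⟩_Q` on `E(Q)` by a maximal
function, and use that the sets `E(Q)` are disjoint. Only finite families of cubes are needed, so the
maximal function is that of a finite family, and its `L^p` bound follows from Vitali covering, the
layer cake formula and absorption (`weak_type`, `maximal_strong`).

*Upper bound* (`upper_bound`). For every constant `c` one has `∫_Q |b - ⟨b⟩_Q| ≤ 2 |Q| ⟨|b - c|⟩_Q`.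
Hölder's inequality for the sum over the family and the Carleson embedding with exponent `r` give the
claim.

*Lower bound* (`lower_bound`). In the dyadic grid of a cube `Q₀`, select below each chosen cube `Q` the
maximal dyadic subcubes on which the mean of `|b - ⟨b⟩_Q|` exceeds twice its mean over `Q`. They
cover at most half of `Q`, so the iterated selection is a sparse family, and by telescoping and
Lebesgue differentiation `|b - ⟨b⟩_{Q₀}| ≤ 2^{d+1} ∑_Q (⨍_Q |b - ⟨b⟩_Q|) 1_Q` almost everywhere on `Q₀`
(`SparseDom.System.sparse_domination`). With `F` the sum on the right, pairing `F` with `F ^ (r - 1)`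
expresses `∫ F ^ r` as a sparse sum whose coefficients are averages of `F ^ (r - 1)`; the Carleson
embedding with exponent `r'` normalises them, so `‖F‖_r` is at most a constant times the supremum
(`duality`). Thus `‖b - ⟨b⟩_{Q₀}‖_{L^r(Q₀)}` is bounded uniformly in `Q₀`. Letting `Q₀` exhaust the
space, the averages `⟨b⟩_{Q₀}` stay bounded, and Fatou's lemma along a convergent subsequence gives
the bound on the whole space (`exhaustion`).
-/

open MeasureTheory ENNReal Set

noncomputable section

/-- `Euc d` is the Euclidean space `ℝ^d`. -/
abbrev Euc (d : ℕ) := EuclideanSpace ℝ (Fin d)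

/-- An axis-parallel cube in `ℝ^d`, described by its center and positive side length. -/
structure Cube (d : ℕ) where
  center : Euc d
  side : ℝ
  side_pos : 0 < side

/-- The set of points of a cube. -/
def Cube.carrier {d : ℕ} (I : Cube d) : Set (Euc d) :=
  {x | ∀ i, |x i - I.center i| ≤ I.side / 2}

/-- The average `⟨b⟩_I` of a function over a cube. -/
def cubeAvg {d : ℕ} (b : Euc d → ℂ) (I : Cube d) : ℂ :=
  (volume I.carrier).toReal⁻¹ • ∫ x in I.carrier, b x

/-- The homogeneous Hölder seminorm `‖b‖_{Ċ^{0,α}}`, valued in `[0,∞]`. -/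
def holderSeminorm {d : ℕ} (α : ℝ) (b : Euc d → ℂ) : ℝ≥0∞ :=
  ⨆ (x : Euc d) (y : Euc d) (_ : x ≠ y), ENNReal.ofReal (‖b x - b y‖ / dist x y ^ α)
/-- The norm `‖b‖_{∙L^r}` = infimum over constants `c` of the `L^r` norm of `b - c`. -/
def dotLrNorm {d : ℕ} (r : ℝ) (b : Euc d → ℂ) : ℝ≥0∞ :=
  ⨅ c : ℂ, eLpNorm (fun x => b x - c) (ENNReal.ofReal r) volume

/-- The BMO norm of `b`, valued in `[0,∞]`. -/
def bmoNorm {d : ℕ} (b : Euc d → ℂ) : ℝ≥0∞ :=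
  ⨆ I : Cube d, ENNReal.ofReal ((volume I.carrier).toReal⁻¹ * ∫ x in I.carrier, ‖b x - cubeAvg b I‖)

/-- The sharp maximal function `M♯b`. -/
def sharpMaximal {d : ℕ} (b : Euc d → ℂ) (x : Euc d) : ℝ≥0∞ :=
  ⨆ (I : Cube d) (_ : x ∈ I.carrier),
    ENNReal.ofReal ((volume I.carrier).toReal⁻¹ * ∫ y in I.carrier, ‖b y - cubeAvg b I‖)

/-- A (countable) collection of cubes is sparse if each cube `Q` carries a measurable subset
`E Q` of at least half its measure, these subsets being pairwise disjoint. -/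
def IsSparse {d : ℕ} (𝒮 : Set (Cube d)) : Prop :=
  𝒮.Countable ∧ ∃ E : Cube d → Set (Euc d),
    (∀ Q ∈ 𝒮, MeasurableSet (E Q) ∧ E Q ⊆ Q.carrier ∧ volume Q.carrier ≤ 2 * volume (E Q)) ∧
    𝒮.PairwiseDisjoint E

/-- Average of `b (·, x2)` over a cube in the first factor. -/
def avgFst {d1 d2 : ℕ} (b : Euc d1 × Euc d2 → ℂ) (I1 : Cube d1) (x2 : Euc d2) : ℂ :=
  (volume I1.carrier).toReal⁻¹ • ∫ y1 in I1.carrier, b (y1, x2)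

/-- Average of `b (x1, ·)` over a cube in the second factor. -/
def avgSnd {d1 d2 : ℕ} (b : Euc d1 × Euc d2 → ℂ) (I2 : Cube d2) (x1 : Euc d1) : ℂ :=
  (volume I2.carrier).toReal⁻¹ • ∫ y2 in I2.carrier, b (x1, y2)

/-- Average of `b` over the rectangle `I1 × I2`. -/
def avgRect {d1 d2 : ℕ} (b : Euc d1 × Euc d2 → ℂ) (I1 : Cube d1) (I2 : Cube d2) : ℂ :=
  (volume (I1.carrier ×ˢ I2.carrier)).toReal⁻¹ • ∫ x in I1.carrier ×ˢ I2.carrier, b x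

/-- The bi-parameter oscillation `osc^{1,1}(b, I1 × I2)`. -/
def osc11 {d1 d2 : ℕ} (b : Euc d1 × Euc d2 → ℂ) (I1 : Cube d1) (I2 : Cube d2) : ℝ :=
  ∫ x in I1.carrier ×ˢ I2.carrier,
    ‖b x - avgFst b I1 x.2 - avgSnd b I2 x.1 + avgRect b I1 I2‖

/-- The `L^p` "norm" (with exponent `p ∈ [1,∞]`) of an `ℝ≥0∞`-valued function. -/
def lpNormENN {α : Type*} [MeasurableSpace α] (μ : Measure α) (p : ℝ≥0∞) (g : α → ℝ≥0∞) : ℝ≥0∞ :=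
  if p = ∞ then essSup g μ else (∫⁻ x, g x ^ p.toReal ∂μ) ^ (1 / p.toReal)

/-- The mixed norm `‖F‖_{L^{v1}_{x1} L^{v2}_{x2}}`. -/
def mixedNorm {d1 d2 : ℕ} {E : Type*} [NormedAddCommGroup E] (v1 v2 : ℝ≥0∞)
    (F : Euc d1 × Euc d2 → E) : ℝ≥0∞ :=
  lpNormENN volume v1 (fun x1 => lpNormENN volume v2 (fun x2 => (‖F (x1, x2)‖₊ : ℝ≥0∞)))

/-- The oscillation `osc^{v1,v2}(b, I1 × I2)` with general mixed exponents. -/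
def oscMixed {d1 d2 : ℕ} (v1 v2 : ℝ≥0∞) (b : Euc d1 × Euc d2 → ℂ)
    (I1 : Cube d1) (I2 : Cube d2) : ℝ≥0∞ :=
  mixedNorm v1 v2 ((I1.carrier ×ˢ I2.carrier).indicator
    (fun x => b x - avgFst b I1 x.2 - avgSnd b I2 x.1 + avgRect b I1 I2))

/-- A standard Calderón–Zygmund kernel on `ℝ^n` with exponent `α` and constant `CK`. -/
def IsCZKernel (n : ℕ) (α CK : ℝ) (K : Euc n → Euc n → ℂ) : Prop :=
  (∀ x y : Euc n, x ≠ y → ‖K x y‖ ≤ CK / dist x y ^ (n : ℝ)) ∧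
  (∀ x x' y : Euc n, x ≠ y → dist x x' ≤ dist x y / 2 →
    ‖K x y - K x' y‖ + ‖K y x - K y x'‖ ≤ CK * dist x x' ^ α / dist x y ^ ((n : ℝ) + α))

/-- Symmetric non-degeneracy of a kernel with constant `c₀`. -/
def SymNonDeg (n : ℕ) (c₀ : ℝ) (K : Euc n → Euc n → ℂ) : Prop :=
  ∀ (y : Euc n) (r : ℝ), 0 < r → ∃ x : Euc n, r ≤ dist x y ∧
    1 / (c₀ * r ^ (n : ℝ)) ≤ ‖K x y‖ ∧ 1 / (c₀ * r ^ (n : ℝ)) ≤ ‖K y x‖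

/-- Distance between two sets in a metric space. -/
def setDist {α : Type*} [PseudoMetricSpace α] (s t : Set α) : ℝ :=
  sInf (Set.image2 dist s t)

/-- An admissible configuration: the rectangles `J1 × J2` and `L1 × L2` have matching side
lengths in each parameter, and separation comparable to the common side length, with
comparability constants `c1 ≤ c2`. -/
def IsAdmissible {d1 d2 : ℕ} (c1 c2 : ℝ) (J1 L1 : Cube d1) (J2 L2 : Cube d2) : Prop :=
  J1.side = L1.side ∧ J2.side = L2.side ∧
  c1 * J1.side ≤ setDist J1.carrier L1.carrier ∧ setDist J1.carrier L1.carrier ≤ c2 * J1.side ∧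
  c1 * J2.side ≤ setDist J2.carrier L2.carrier ∧ setDist J2.carrier L2.carrier ≤ c2 * J2.side

/-- The difference `B(x,y) = b(x1,x2) − b(x1,y2) − b(y1,x2) + b(y1,y2)`. -/
def biB {d1 d2 : ℕ} (b : Euc d1 × Euc d2 → ℂ) (x y : Euc d1 × Euc d2) : ℂ :=
  b (x.1, x.2) - b (x.1, y.2) - b (y.1, x.2) + b (y.1, y.2)

/-- The bilinear form `Λ(f1, f2) = ∬ B(x,y) K1(x1,y1) K2(x2,y2) f1(y) f2(x) dy dx`. -/
def biCommForm {d1 d2 : ℕ} (b : Euc d1 × Euc d2 → ℂ) (K1 : Euc d1 → Euc d1 → ℂ)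
    (K2 : Euc d2 → Euc d2 → ℂ) (f1 f2 : Euc d1 × Euc d2 → ℂ) : ℂ :=
  ∫ x : Euc d1 × Euc d2, ∫ y : Euc d1 × Euc d2,
    biB b x y * K1 x.1 y.1 * K2 x.2 y.2 * f1 y * f2 x

/-! ### Cubes: measurability, volume, enlargement -/

lemma carrier_eq_preimage {d : ℕ} (Q : Cube d) :
    Q.carrier = (fun x : Euc d => (WithLp.ofLp x : Fin d → ℝ)) ⁻¹'
      (Set.univ.pi fun i => Icc (Q.center i - Q.side / 2) (Q.center i + Q.side / 2)) := by
  ext x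
  simp only [Cube.carrier, mem_ofPred_eq, mem_preimage, mem_pi, mem_univ, true_implies, mem_Icc,
    abs_le]
  refine forall_congr' fun i => ?_
  constructor <;> rintro ⟨h1, h2⟩ <;> constructor <;> linarith

lemma measurableSet_carrier {d : ℕ} (Q : Cube d) : MeasurableSet Q.carrier := by
  rw [carrier_eq_preimage]
  exact (PiLp.volume_preserving_ofLp (Fin d)).measurable
    (MeasurableSet.univ_pi fun i => measurableSet_Icc)

lemma volume_carrier {d : ℕ} (Q : Cube d) : volume Q.carrier = ENNReal.ofReal Q.side ^ d := by
  rw [carrier_eq_preimage, (PiLp.volume_preserving_ofLp (Fin d)).measure_preimage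
    (MeasurableSet.univ_pi fun i => measurableSet_Icc).nullMeasurableSet, volume_pi_pi]
  simp only [Real.volume_Icc]
  simp

lemma volume_carrier_ne_zero {d : ℕ} (Q : Cube d) : volume Q.carrier ≠ 0 := by
  rw [volume_carrier]
  exact pow_ne_zero _ (by simpa using Q.side_pos)

lemma volume_carrier_ne_top {d : ℕ} (Q : Cube d) : volume Q.carrier ≠ ∞ := by
  rw [volume_carrier]
  exact ENNReal.pow_ne_top ofReal_ne_top

lemma center_mem_carrier {d : ℕ} (Q : Cube d) : Q.center ∈ Q.carrier := by
  intro i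
  simpa using (half_pos Q.side_pos).le

/-- The cube with the same center and five times the side length. -/
def Cube.enlarge {d : ℕ} (Q : Cube d) : Cube d :=
  ⟨Q.center, 5 * Q.side, by linarith [Q.side_pos]⟩

lemma volume_enlarge {d : ℕ} (Q : Cube d) :
    volume Q.enlarge.carrier = 5 ^ d * volume Q.carrier := by
  rw [volume_carrier, volume_carrier, Cube.enlarge, ENNReal.ofReal_mul (by norm_num), mul_pow]
  norm_num

lemma carrier_subset_enlarge {d : ℕ} {P Q : Cube d} (h : (P.carrier ∩ Q.carrier).Nonempty)
    (hs : P.side ≤ 2 * Q.side) : P.carrier ⊆ Q.enlarge.carrier := by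
  obtain ⟨z, hzP, hzQ⟩ := h
  intro x hx i
  have h1 := abs_le.1 (hx i)
  have h2 := abs_le.1 (hzP i)
  have h3 := abs_le.1 (hzQ i)
  simp only [Cube.enlarge]
  rw [abs_le]
  constructor <;> linarith [h1.1, h1.2, h2.1, h2.2, h3.1, h3.2]

/-! ### The maximal function of a finite family of cubes -/

/-- The maximal function `x ↦ max {c Q : Q ∈ T, x ∈ Q}` attached to a finite family `T` of cubes
with weights `c`, with value `0` outside the union of the cubes. -/
def finMax {d : ℕ} (T : Finset (Cube d)) (c : Cube d → NNReal) (x : Euc d) : NNReal :=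
  T.sup fun Q => Q.carrier.indicator (fun _ => c Q) x

lemma measurable_finMax {d : ℕ} (T : Finset (Cube d)) (c : Cube d → NNReal) :
    Measurable (finMax T c) := by
  classical
  unfold finMax
  induction T using Finset.induction_on with
  | empty => simp
  | insert Q T hQ ih =>
    simp only [Finset.sup_insert]
    exact (measurable_const.indicator (measurableSet_carrier Q)).sup ih

lemma lt_finMax {d : ℕ} (T : Finset (Cube d)) (c : Cube d → NNReal) (x : Euc d) (t : NNReal) :
    t < finMax T c x ↔ ∃ Q ∈ T, x ∈ Q.carrier ∧ t < c Q := by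
  unfold finMax
  rw [Finset.lt_sup_iff]
  refine exists_congr fun Q => and_congr_right fun _ => ?_
  by_cases hx : x ∈ Q.carrier <;> simp [hx]

lemma le_finMax {d : ℕ} {T : Finset (Cube d)} (c : Cube d → NNReal) {x : Euc d} {Q : Cube d}
    (hQ : Q ∈ T) (hx : x ∈ Q.carrier) : c Q ≤ finMax T c x := by
  have := Finset.le_sup (f := fun Q => Q.carrier.indicator (fun _ => c Q) x) hQ
  simpa [hx, finMax] using this

/-- The weak type inequality, in the form that keeps the integral on the level set itself: the
cubes selected by Vitali's covering lemma are contained in the level set. -/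
lemma weak_type {d : ℕ} (T : Finset (Cube d)) (c : Cube d → NNReal) (g : Euc d → ℝ≥0∞)
    (hc : ∀ Q ∈ T, c Q * volume Q.carrier ≤ ∫⁻ x in Q.carrier, g x) (t : NNReal) :
    t * volume {x | t < finMax T c x} ≤ 5 ^ d * ∫⁻ x in {x | t < finMax T c x}, g x := by
  classical
  obtain ⟨R, hR⟩ : ∃ R, ∀ Q ∈ T, Q.side ≤ R := by
    obtain ⟨R, hR⟩ := (T.image Cube.side).bddAbove
    exact ⟨R, fun Q hQ => hR (by simpa using ⟨Q, hQ, rfl⟩)⟩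
  obtain ⟨u, hut, hdisj, hcov⟩ := Vitali.exists_disjoint_subfamily_covering_enlargement
    (fun Q : Cube d => Q.carrier) {Q | Q ∈ T ∧ t < c Q} Cube.side 2 (by norm_num)
    (fun Q _ => Q.side_pos.le) R (fun Q hQ => hR Q hQ.1) (fun Q _ => ⟨_, center_mem_carrier Q⟩)
  have hufin : u.Finite := T.finite_toSet.subset fun Q hQ => (hut hQ).1
  have hsub : {x | t < finMax T c x} ⊆ ⋃ Q ∈ u, Q.enlarge.carrier := by
    intro x hx
    obtain ⟨Q, hQ, hxQ, htQ⟩ := (lt_finMax T c x t).1 hx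
    obtain ⟨P, hP, hne, hs⟩ := hcov Q ⟨hQ, htQ⟩
    exact mem_biUnion hP (carrier_subset_enlarge hne hs hxQ)
  have hsub' : (⋃ Q ∈ u, Q.carrier) ⊆ {x | t < finMax T c x} := by
    intro x hx
    obtain ⟨Q, hQ, hxQ⟩ := mem_iUnion₂.1 hx
    exact (lt_finMax T c x t).2 ⟨Q, (hut hQ).1, hxQ, (hut hQ).2⟩
  calc t * volume {x | t < finMax T c x}
      ≤ t * ∑' Q : u, volume Q.1.enlarge.carrier := by
        gcongr
        exact (measure_mono hsub).trans (measure_biUnion_le _ hufin.countable _)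
    _ = 5 ^ d * ∑' Q : u, t * volume Q.1.carrier := by
        simp only [volume_enlarge, ENNReal.tsum_mul_left]
        ring
    _ ≤ 5 ^ d * ∑' Q : u, ∫⁻ x in Q.1.carrier, g x := by
        gcongr with Q
        refine le_trans ?_ (hc Q.1 (hut Q.2).1)
        gcongr
        exact (hut Q.2).2.le
    _ = 5 ^ d * ∫⁻ x in ⋃ Q ∈ u, Q.carrier, g x := by
        rw [lintegral_biUnion hufin.countable (fun Q _ => measurableSet_carrier Q) hdisj]
    _ ≤ _ := by
        gcongr

/-- The strong type inequality before absorption. It follows from the weak type inequality by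
the layer cake formula, applied both to Lebesgue measure and to the measure with density `g`. -/
lemma strong_type_aux {d : ℕ} (T : Finset (Cube d)) (c : Cube d → NNReal) (g : Euc d → ℝ≥0∞)
    (hg : Measurable g)
    (hc : ∀ Q ∈ T, c Q * volume Q.carrier ≤ ∫⁻ x in Q.carrier, g x) {p : ℝ} (hp : 1 < p) :
    ∫⁻ x, (finMax T c x : ℝ≥0∞) ^ p ≤
      5 ^ d * ENNReal.ofReal (p / (p - 1)) *
        ∫⁻ x, g x * (finMax T c x : ℝ≥0∞) ^ (p - 1) := by
  have hM : Measurable fun x => (finMax T c x : ℝ) := (measurable_finMax T c).coe_nnreal_real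
  have key (μ : Measure (Euc d)) {s : ℝ} (hs : 0 < s) :=
    lintegral_rpow_eq_lintegral_meas_lt_mul μ (f := fun x => (finMax T c x : ℝ))
      (Filter.Eventually.of_forall fun x => NNReal.coe_nonneg _) hM.aemeasurable hs
  have conv (x : Euc d) {s : ℝ} (hs : 0 < s) :
      ENNReal.ofReal ((finMax T c x : ℝ) ^ s) = (finMax T c x : ℝ≥0∞) ^ s := by
    rw [← ENNReal.ofReal_rpow_of_nonneg (NNReal.coe_nonneg _) hs.le, ENNReal.ofReal_coe_nnreal]
  have h1 := key volume (by linarith : 0 < p)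
  have h2 := key (volume.withDensity g) (by linarith : 0 < p - 1)
  simp only [conv _ (by linarith : 0 < p)] at h1
  simp only [conv _ (by linarith : 0 < p - 1)] at h2
  rw [lintegral_withDensity_eq_lintegral_mul _ hg
    ((measurable_finMax T c).coe_nnreal_ennreal.pow_const _)] at h2
  simp only [Pi.mul_apply] at h2
  rw [h1, h2, ← mul_assoc, mul_assoc (5 ^ d), ← ENNReal.ofReal_mul (by
    apply div_nonneg <;> linarith), div_mul_cancel₀ _ (by linarith : p - 1 ≠ 0),
    mul_comm (5 ^ d), mul_assoc]
  gcongr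
  rw [← lintegral_const_mul' _ _ (by finiteness)]
  refine setLIntegral_mono' measurableSet_Ioi fun t ht => ?_
  have ht : 0 < t := ht
  lift t to NNReal using ht.le
  have hset : {a | (t : ℝ) < (finMax T c a : ℝ)} = {a | t < finMax T c a} := by
    ext; simp
  rw [hset, withDensity_apply _ (measurableSet_lt measurable_const (measurable_finMax T c)),
    ← mul_assoc]
  have hsplit : ENNReal.ofReal ((t : ℝ) ^ (p - 1)) =
      t * ENNReal.ofReal ((t : ℝ) ^ (p - 1 - 1)) := by
    rw [← ENNReal.ofReal_coe_nnreal, ← ENNReal.ofReal_mul (NNReal.coe_nonneg _)]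
    congr 1
    rw [Real.rpow_sub_one ht.ne' (p - 1)]
    field_simp
  rw [hsplit, ← mul_assoc, mul_comm (volume _)]
  exact mul_le_mul' (weak_type T c g hc t) le_rfl

/-- Absorption: `A ≤ K * B ^ (1/p) * A ^ (1/q)` with `A < ∞` yields `A ≤ K ^ p * B`. -/
lemma absorb {p q : ℝ} (hpq : p.HolderConjugate q) {A K B : ℝ≥0∞} (hA : A ≠ ∞)
    (h : A ≤ K * B ^ (1 / p) * A ^ (1 / q)) : A ≤ K ^ p * B := by
  rcases eq_or_ne A 0 with rfl | hA0
  · simp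
  have h0 : A ^ (1 / q) ≠ 0 := by simp [ENNReal.rpow_eq_zero_iff, hA0, hA]
  have ht : A ^ (1 / q) ≠ ∞ := ENNReal.rpow_ne_top_of_nonneg (by
    have := hpq.symm.pos; positivity) hA
  have hAA : A = A ^ (1 / p) * A ^ (1 / q) := by
    rw [← ENNReal.rpow_add _ _ hA0 hA]
    have := hpq.inv_add_inv_eq_one
    simp only [one_div]
    rw [this, ENNReal.rpow_one]
  have h' : A ^ (1 / p) ≤ K * B ^ (1 / p) := by
    exact (ENNReal.mul_le_mul_iff_left h0 ht).1 (hAA.symm.le.trans h)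
  have := ENNReal.rpow_le_rpow h' hpq.nonneg
  rwa [ENNReal.mul_rpow_of_nonneg _ _ hpq.nonneg, ← ENNReal.rpow_mul, ← ENNReal.rpow_mul,
    one_div_mul_cancel hpq.ne_zero, ENNReal.rpow_one, ENNReal.rpow_one] at this

/-- The average of a `[0,∞]`-valued function over a cube. -/
def lavg {d : ℕ} (g : Euc d → ℝ≥0∞) (Q : Cube d) : ℝ≥0∞ :=
  (∫⁻ x in Q.carrier, g x) / volume Q.carrier

lemma le_one_add_rpow {r : ℝ} (hr : 1 < r) (y : ℝ≥0∞) : y ≤ 1 + y ^ r := by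
  rcases le_total y 1 with hy | hy
  · exact hy.trans le_self_add
  · refine le_trans ?_ le_add_self
    simpa using ENNReal.rpow_le_rpow_of_exponent_le hy hr.le

lemma setLIntegral_ne_top_of_rpow {d : ℕ} {g : Euc d → ℝ≥0∞} {p : ℝ}
    (hp : 1 < p) (hfin : ∫⁻ x, g x ^ p ≠ ∞) {s : Set (Euc d)}
    (hs : volume s ≠ ∞) : ∫⁻ x in s, g x ≠ ∞ := by
  refine ne_top_of_le_ne_top ?_ (lintegral_mono fun x => le_one_add_rpow hp (g x))
  rw [lintegral_add_left measurable_const]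
  simp only [lintegral_const, one_mul, Measure.restrict_apply MeasurableSet.univ, univ_inter]
  exact ENNReal.add_ne_top.2 ⟨hs, ne_top_of_le_ne_top hfin (setLIntegral_le_lintegral _ _)⟩

lemma lavg_ne_top {d : ℕ} {g : Euc d → ℝ≥0∞} {p : ℝ}
    (hp : 1 < p) (hfin : ∫⁻ x, g x ^ p ≠ ∞) (Q : Cube d) : lavg g Q ≠ ∞ :=
  ENNReal.div_ne_top (setLIntegral_ne_top_of_rpow hp hfin (volume_carrier_ne_top Q))
    (volume_carrier_ne_zero Q)

lemma maximal_strong {d : ℕ} (T : Finset (Cube d)) (g : Euc d → ℝ≥0∞) (hg : Measurable g)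
    {p : ℝ} (hp : 1 < p) (hfin : ∫⁻ x, g x ^ p ≠ ∞) :
    ∫⁻ x, (finMax T (fun Q => (lavg g Q).toNNReal) x : ℝ≥0∞) ^ p ≤
      (5 ^ d * ENNReal.ofReal (p / (p - 1))) ^ p * ∫⁻ x, g x ^ p := by
  set c : Cube d → NNReal := fun Q => (lavg g Q).toNNReal with hcdef
  have hpq : p.HolderConjugate (p / (p - 1)) := Real.HolderConjugate.conjExponent hp
  have hp0 : 0 < p := by linarith
  have hc : ∀ Q ∈ T, c Q * volume Q.carrier ≤ ∫⁻ x in Q.carrier, g x := by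
    intro Q _
    rw [hcdef, ENNReal.coe_toNNReal (lavg_ne_top hp hfin Q), lavg,
      ENNReal.div_mul_cancel (volume_carrier_ne_zero Q) (volume_carrier_ne_top Q)]
  have hMm : Measurable fun x => (finMax T c x : ℝ≥0∞) :=
    (measurable_finMax T c).coe_nnreal_ennreal
  refine absorb hpq ?_ ?_
  · -- the maximal function is bounded and supported on a finite union of cubes
    have hle : ∀ x, (finMax T c x : ℝ≥0∞) ^ p ≤
        ∑ Q ∈ T, Q.carrier.indicator (fun _ => (c Q : ℝ≥0∞) ^ p) x := by
      intro x
      rcases T.eq_empty_or_nonempty with rfl | hT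
      · simp [finMax, hp0]
      obtain ⟨Q, hQ, hQe⟩ := Finset.exists_mem_eq_sup T hT
        fun Q => Q.carrier.indicator (fun _ => c Q) x
      refine le_trans ?_ (Finset.single_le_sum (f := fun Q : Cube d =>
        Q.carrier.indicator (fun _ => (c Q : ℝ≥0∞) ^ p) x) (fun _ _ => zero_le) hQ)
      rw [finMax, hQe]
      by_cases hx : x ∈ Q.carrier <;> simp [hx, hp0]
    refine ne_top_of_le_ne_top ?_ (lintegral_mono hle)
    rw [lintegral_finsetSum _ fun Q _ => measurable_const.indicator (measurableSet_carrier Q)]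
    refine ENNReal.sum_ne_top.2 fun Q _ => ?_
    rw [lintegral_indicator_const (measurableSet_carrier Q)]
    exact ENNReal.mul_ne_top (ENNReal.rpow_ne_top_of_nonneg hp0.le coe_ne_top)
      (volume_carrier_ne_top Q)
  · refine (strong_type_aux T c g hg hc hp).trans ?_
    rw [mul_assoc _ (_ ^ (1 / p))]
    gcongr
    have := ENNReal.lintegral_mul_le_Lp_mul_Lq volume hpq hg.aemeasurable
      (hMm.pow_const (p - 1)).aemeasurable
    simp only [Pi.mul_apply, ← ENNReal.rpow_mul] at this
    rwa [mul_div_cancel₀ _ (by linarith : p - 1 ≠ 0)] at this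

/-- The Carleson embedding for sparse families: `∑ |Q| ⟨g⟩_Q ^ p ≲ ∫ g ^ p`. -/
lemma carleson_measurable {d : ℕ} {T : Finset (Cube d)} (hT : IsSparse (T : Set (Cube d)))
    {g : Euc d → ℝ≥0∞} (hg : Measurable g) {p : ℝ} (hp : 1 < p) :
    ∑ Q ∈ T, volume Q.carrier * lavg g Q ^ p ≤
      2 * (5 ^ d * ENNReal.ofReal (p / (p - 1))) ^ p * ∫⁻ x, g x ^ p := by
  have hp0 : 0 < p := by linarith
  by_cases hfin : ∫⁻ x, g x ^ p = ∞
  · rw [hfin, ENNReal.mul_top]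
    · exact le_top
    · have : 0 < p / (p - 1) := div_pos hp0 (by linarith)
      simp only [ne_eq, mul_eq_zero, ENNReal.rpow_eq_zero_iff, not_or]
      refine ⟨by norm_num, ?_⟩
      simp [hp0.not_gt, this]
  obtain ⟨-, E, hE, hdisj⟩ := hT
  set c : Cube d → NNReal := fun Q => (lavg g Q).toNNReal with hcdef
  calc ∑ Q ∈ T, volume Q.carrier * lavg g Q ^ p
      ≤ ∑ Q ∈ T, 2 * ∫⁻ x in E Q, (finMax T c x : ℝ≥0∞) ^ p := by
        refine Finset.sum_le_sum fun Q hQ => ?_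
        obtain ⟨hEm, hEs, hEv⟩ := hE Q hQ
        calc volume Q.carrier * lavg g Q ^ p ≤ 2 * volume (E Q) * lavg g Q ^ p := by gcongr
          _ = 2 * ∫⁻ x in E Q, lavg g Q ^ p := by
            rw [setLIntegral_const]; ring
          _ ≤ _ := by
            gcongr 2 * ?_
            refine setLIntegral_mono' hEm fun x hx => ?_
            gcongr
            rw [← ENNReal.coe_toNNReal (lavg_ne_top hp hfin Q)]
            exact_mod_cast le_finMax c hQ (hEs hx)
    _ = 2 * ∫⁻ x in ⋃ Q ∈ T, E Q, (finMax T c x : ℝ≥0∞) ^ p := by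
        rw [← Finset.mul_sum, lintegral_biUnion_finset hdisj fun Q hQ => (hE Q hQ).1]
    _ ≤ 2 * ∫⁻ x, (finMax T c x : ℝ≥0∞) ^ p := by
        gcongr
        exact Measure.restrict_le_self
    _ ≤ _ := by
        rw [mul_assoc]
        gcongr
        exact maximal_strong T g hg hp hfin

/-- The constant in the Carleson embedding. -/
def carlesonConst (d : ℕ) (p : ℝ) : ℝ≥0∞ := 2 * (5 ^ d * ENNReal.ofReal (p / (p - 1))) ^ p

lemma carlesonConst_ne_top (d : ℕ) {p : ℝ} (hp : 1 < p) : carlesonConst d p ≠ ∞ := by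
  refine ENNReal.mul_ne_top (by norm_num) (ENNReal.rpow_ne_top_of_nonneg (by linarith) ?_)
  finiteness

lemma carleson {d : ℕ} {T : Finset (Cube d)} (hT : IsSparse (T : Set (Cube d)))
    {g : Euc d → ℝ≥0∞} (hg : AEMeasurable g) {p : ℝ} (hp : 1 < p) :
    ∑ Q ∈ T, volume Q.carrier * lavg g Q ^ p ≤ carlesonConst d p * ∫⁻ x, g x ^ p := by
  have h := carleson_measurable hT hg.measurable_mk hp
  have h1 : ∫⁻ x, g x ^ p = ∫⁻ x, hg.mk g x ^ p :=
    lintegral_congr_ae (hg.ae_eq_mk.mono fun x hx => by simp only [hx])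
  have h2 : ∀ Q : Cube d, lavg g Q = lavg (hg.mk g) Q := fun Q => by
    rw [lavg, lavg, lintegral_congr_ae (ae_restrict_of_ae hg.ae_eq_mk)]
  simpa only [h1, h2, carlesonConst] using h

/-! ### Sparse domination in an abstract dyadic system -/

set_option linter.unusedSectionVars false

namespace SparseDom

open Filter Topology

variable {X ι : Type*} [MeasurableSpace X]

/-- The cell with index `q = (k, m)`: all points whose label at generation `k` equals `m`. -/
def cell (key : ℕ → X → ι) (q : ℕ × ι) : Set X := {x | key q.1 x = q.2}

/-- A nested sequence of partitions of `X` into measurable cells of positive and finite measure,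
with doubling constant `D` between consecutive generations. The label of the cell of `x` at
generation `k` is `key k x`; every label is required to occur at every generation. -/
structure System (μ : Measure X) (key : ℕ → X → ι) (D : ℝ≥0∞) : Prop where
  one_le : 1 ≤ D
  nested : ∀ k x y, key (k + 1) x = key (k + 1) y → key k x = key k y
  meas : ∀ q, MeasurableSet (cell key q)
  pos : ∀ q, μ (cell key q) ≠ 0
  fin : ∀ q, μ (cell key q) ≠ ∞
  doubling : ∀ q p : ℕ × ι, p.1 = q.1 + 1 → μ (cell key q) ≤ D * μ (cell key p)

variable {μ : Measure X} {key : ℕ → X → ι} {D : ℝ≥0∞}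

lemma mem_cell_self (k : ℕ) (x : X) : x ∈ cell key (k, key k x) := rfl

lemma System.nested_le (h : System μ key D) {j k : ℕ} (hjk : j ≤ k) {x y : X}
    (hxy : key k x = key k y) : key j x = key j y := by
  induction hjk with
  | refl => exact hxy
  | step _ ih => exact ih (h.nested _ _ _ hxy)

lemma System.subset_of_mem (h : System μ key D) {p q : ℕ × ι} (hle : q.1 ≤ p.1) {x : X}
    (hp : x ∈ cell key p) (hq : x ∈ cell key q) : cell key p ⊆ cell key q := by
  intro y hy
  have h1 : key p.1 y = key p.1 x := Eq.trans hy (Eq.symm hp)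
  exact (h.nested_le hle h1).trans hq

lemma System.nonempty (h : System μ key D) (q : ℕ × ι) : (cell key q).Nonempty :=
  nonempty_of_measure_ne_zero (h.pos q)

lemma eq_of_mem {p q : ℕ × ι} (hpq : p.1 = q.1) {x : X} (hp : x ∈ cell key p)
    (hq : x ∈ cell key q) : p = q := by
  refine Prod.ext hpq ?_
  have h1 : key p.1 x = p.2 := hp
  have h2 : key q.1 x = q.2 := hq
  rw [← h1, ← h2, hpq]

/-- The average of `b` over a cell. -/
def avg (μ : Measure X) (key : ℕ → X → ι) (b : X → ℂ) (q : ℕ × ι) : ℂ :=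
  ⨍ x in cell key q, b x ∂μ

/-- The total deviation, over the cell `p`, of `b` from its average over the cell `q`. -/
def dev (μ : Measure X) (key : ℕ → X → ι) (b : X → ℂ) (q p : ℕ × ι) : ℝ≥0∞ :=
  ∫⁻ x in cell key p, ‖b x - avg μ key b q‖ₑ ∂μ

/-- The mean oscillation of `b` over the cell `q`. -/
def mosc (μ : Measure X) (key : ℕ → X → ι) (b : X → ℂ) (q : ℕ × ι) : ℝ≥0∞ :=
  dev μ key b q q / μ (cell key q)

/-- The stopping condition: the mean deviation over `p` of `b` from its average over `q` exceeds
twice the mean oscillation of `b` over `q`, with denominators cleared. -/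
def Stops (μ : Measure X) (key : ℕ → X → ι) (b : X → ℂ) (q p : ℕ × ι) : Prop :=
  2 * dev μ key b q q * μ (cell key p) < dev μ key b q p * μ (cell key q)

/-- `p` is a stopping child of `q`: a maximal cell strictly below `q` at which the stopping
condition holds. -/
def Child (μ : Measure X) (key : ℕ → X → ι) (b : X → ℂ) (q p : ℕ × ι) : Prop :=
  q.1 < p.1 ∧ cell key p ⊆ cell key q ∧ Stops μ key b q p ∧
    ∀ p' : ℕ × ι, q.1 < p'.1 → p'.1 < p.1 → cell key p ⊆ cell key p' → ¬ Stops μ key b q p'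

/-- The union of the stopping children of `q`. -/
def childUnion (μ : Measure X) (key : ℕ → X → ι) (b : X → ℂ) (q : ℕ × ι) : Set X :=
  ⋃ p ∈ {p | Child μ key b q p}, cell key p

/-- The `n`-th generation of iterated stopping children of `q₀`. -/
def gen (μ : Measure X) (key : ℕ → X → ι) (b : X → ℂ) (q₀ : ℕ × ι) : ℕ → Set (ℕ × ι)
  | 0 => {q₀}
  | n + 1 => {p | ∃ q ∈ gen μ key b q₀ n, Child μ key b q p}

/-- The union of the cells of the `n`-th generation. -/
def genUnion (μ : Measure X) (key : ℕ → X → ι) (b : X → ℂ) (q₀ : ℕ × ι) (n : ℕ) : Set X :=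
  ⋃ p ∈ gen μ key b q₀ n, cell key p

variable {b : X → ℂ}

lemma childUnion_subset (q : ℕ × ι) : childUnion μ key b q ⊆ cell key q :=
  iUnion₂_subset fun _ hp => hp.2.1

lemma System.child_disjoint (h : System μ key D) (q : ℕ × ι) :
    {p | Child μ key b q p}.PairwiseDisjoint (cell key) := by
  intro p hp p' hp' hne
  rw [Function.onFun, Set.disjoint_left]
  intro x hx hx'
  rcases lt_trichotomy p.1 p'.1 with hlt | heq | hlt
  · exact hp'.2.2.2 p hp.1 hlt (h.subset_of_mem hlt.le hx' hx) hp.2.2.1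
  · exact hne (eq_of_mem heq hx hx')
  · exact hp.2.2.2 p' hp'.1 hlt (h.subset_of_mem hlt.le hx hx') hp'.2.2.1

variable [Countable ι]

lemma System.measurableSet_childUnion (h : System μ key D) (q : ℕ × ι) :
    MeasurableSet (childUnion μ key b q) :=
  MeasurableSet.biUnion (to_countable _) fun p _ => h.meas p

lemma System.dev_ne_top (h : System μ key D) {p : ℕ × ι} (q : ℕ × ι)
    (hb : IntegrableOn b (cell key p) μ) : dev μ key b q p ≠ ∞ := by
  have : IntegrableOn (fun x => b x - avg μ key b q) (cell key p) μ :=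
    hb.sub (integrableOn_const (h.fin p))
  exact this.2.ne

/-- The stopping children of `q` fill at most half of `q`, by Chebyshev's inequality. -/
lemma System.two_mul_measure_childUnion_le (h : System μ key D) {q : ℕ × ι}
    (hb : IntegrableOn b (cell key q) μ) :
    2 * μ (childUnion μ key b q) ≤ μ (cell key q) := by
  have hsum : 2 * dev μ key b q q * μ (childUnion μ key b q) ≤
      dev μ key b q q * μ (cell key q) := by
    calc 2 * dev μ key b q q * μ (childUnion μ key b q)
        ≤ ∑' p : {p | Child μ key b q p}, 2 * dev μ key b q q * μ (cell key p.1) := by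
          rw [ENNReal.tsum_mul_left]
          gcongr
          exact measure_biUnion_le _ (to_countable _) _
      _ ≤ ∑' p : {p | Child μ key b q p}, dev μ key b q p.1 * μ (cell key q) :=
          ENNReal.tsum_le_tsum fun p => p.2.2.2.1.le
      _ = (∫⁻ x in childUnion μ key b q, ‖b x - avg μ key b q‖ₑ ∂μ) * μ (cell key q) := by
          rw [ENNReal.tsum_mul_right, childUnion,
            lintegral_biUnion (to_countable _) (fun p _ => h.meas p) (h.child_disjoint q)]
          rfl
      _ ≤ _ := by
          gcongr
          exact lintegral_mono_set (childUnion_subset q)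
  rcases eq_or_ne (dev μ key b q q) 0 with h0 | h0
  · -- without oscillation there are no stopping children
    have hempty : childUnion μ key b q = ∅ := by
      refine subset_empty_iff.1 (iUnion₂_subset fun p hp => ?_)
      have hdev : dev μ key b q p = 0 :=
        le_antisymm ((lintegral_mono_set hp.2.1).trans h0.le) zero_le
      have := hp.2.2.1
      simp [Stops, h0, hdev] at this
    simp [hempty]
  · rw [mul_comm 2, mul_assoc] at hsum
    exact (ENNReal.mul_le_mul_iff_right h0 (h.dev_ne_top q hb)).1 hsum

lemma System.sparse_set (h : System μ key D) {q : ℕ × ι}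
    (hb : IntegrableOn b (cell key q) μ) :
    μ (cell key q) ≤ 2 * μ (cell key q \ childUnion μ key b q) := by
  have h1 := h.two_mul_measure_childUnion_le hb
  have h2 : μ (cell key q) ≤
      μ (cell key q \ childUnion μ key b q) + μ (childUnion μ key b q) := by
    exact (measure_mono (by rw [sdiff_union_self]; exact subset_union_left)).trans
      (measure_union_le _ _)
    
  have h3 : μ (cell key q) + μ (cell key q) ≤
      2 * μ (cell key q \ childUnion μ key b q) + μ (cell key q) := by
    calc μ (cell key q) + μ (cell key q) = 2 * μ (cell key q) := by ring
      _ ≤ 2 * (μ (cell key q \ childUnion μ key b q) + μ (childUnion μ key b q)) := by gcongr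
      _ = 2 * μ (cell key q \ childUnion μ key b q) + 2 * μ (childUnion μ key b q) := by ring
      _ ≤ _ := by gcongr
  exact (ENNReal.add_le_add_iff_right (h.fin q)).1 h3

/-- The mean deviation over a stopping child is at most `2 * D` times the oscillation of `q`,
because the dyadic parent of the child is either `q` itself or not a stopping cell. -/
lemma System.dev_child_le (h : System μ key D) {q p : ℕ × ι} (hp : Child μ key b q p) :
    dev μ key b q p * μ (cell key q) ≤ 2 * D * dev μ key b q q * μ (cell key p) := by
  obtain ⟨hlt, hsub, -, hmax⟩ := hp
  obtain ⟨x, hx⟩ := h.nonempty p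
  have hkey : p.1 = p.1 - 1 + 1 := by omega
  set p' : ℕ × ι := (p.1 - 1, key (p.1 - 1) x) with hp'
  have hpp' : cell key p ⊆ cell key p' :=
    h.subset_of_mem (Nat.sub_le _ _) hx (mem_cell_self _ _)
  have hdoub : μ (cell key p') ≤ D * μ (cell key p) := h.doubling p' p hkey
  rcases eq_or_lt_of_le (by omega : q.1 ≤ p.1 - 1) with heq | hlt'
  · have hq : q = p' := eq_of_mem heq (hsub hx) (mem_cell_self _ _)
    calc dev μ key b q p * μ (cell key q) ≤ dev μ key b q q * (D * μ (cell key p)) := by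
          gcongr
          · exact lintegral_mono_set hsub
          · exact hq ▸ hdoub
      _ = 1 * D * dev μ key b q q * μ (cell key p) := by ring
      _ ≤ _ := by gcongr; norm_num
  · have hns := not_lt.1 (hmax p' hlt' (by simp only [hp']; omega) hpp')
    calc dev μ key b q p * μ (cell key q) ≤ dev μ key b q p' * μ (cell key q) := by
          gcongr
          exact lintegral_mono_set hpp'
      _ ≤ 2 * dev μ key b q q * μ (cell key p') := hns
      _ ≤ 2 * dev μ key b q q * (D * μ (cell key p)) := by gcongr
      _ = _ := by ring

lemma System.avg_sub_le (h : System μ key D) {p : ℕ × ι} (q : ℕ × ι)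
    (hb : IntegrableOn b (cell key p) μ) :
    ‖avg μ key b p - avg μ key b q‖ₑ ≤ dev μ key b q p / μ (cell key p) := by
  set c := avg μ key b q with hc
  have hpos : 0 < μ.real (cell key p) := ENNReal.toReal_pos (h.pos p) (h.fin p)
  have hE : avg μ key b p - c = (μ.real (cell key p))⁻¹ • ∫ x in cell key p, (b x - c) ∂μ := by
    rw [integral_sub hb (integrableOn_const (h.fin p)), setIntegral_const, smul_sub, smul_smul,
      inv_mul_cancel₀ hpos.ne', one_smul, avg, setAverage_eq]
  rw [hE, enorm_smul, ENNReal.div_eq_inv_mul]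
  gcongr
  · rw [enorm_inv hpos.ne', Real.enorm_eq_ofReal hpos.le, Measure.real,
      ENNReal.ofReal_toReal (h.fin p)]
  · exact enorm_integral_le_lintegral_enorm _

lemma System.avg_child_le (h : System μ key D) {q p : ℕ × ι} (hp : Child μ key b q p)
    (hb : IntegrableOn b (cell key p) μ) :
    ‖avg μ key b p - avg μ key b q‖ₑ ≤ 2 * D * mosc μ key b q := by
  refine (h.avg_sub_le q hb).trans ?_
  rw [ENNReal.div_le_iff (h.pos p) (h.fin p), mosc, ← mul_div_assoc, ENNReal.mul_comm_div,
    ← mul_div_assoc, ENNReal.le_div_iff_mul_le (Or.inl (h.pos q)) (Or.inl (h.fin q))]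
  exact h.dev_child_le hp

/-- `x` is a Lebesgue point of `b` along the cells containing it. -/
def IsLebesguePoint (μ : Measure X) (key : ℕ → X → ι) (b : X → ℂ) (x : X) : Prop :=
  Tendsto (fun k => (∫⁻ y in cell key (k, key k x), ‖b y - b x‖ₑ ∂μ) /
    μ (cell key (k, key k x))) atTop (𝓝 0)

/-- At a Lebesgue point outside the stopping children no cell below `q` containing `x` stops, so the
mean deviations converge to `‖b x - ⟨b⟩_q‖` below the stopping threshold. -/
lemma System.le_of_not_mem_childUnion (h : System μ key D) {q : ℕ × ι} {x : X}
    (hbm : AEStronglyMeasurable b μ)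
    (hx : x ∈ cell key q) (hx' : x ∉ childUnion μ key b q) (hL : IsLebesguePoint μ key b x) :
    ‖b x - avg μ key b q‖ₑ ≤ 2 * mosc μ key b q := by
  classical
  have hns : ∀ k, q.1 < k → ¬ Stops μ key b q (k, key k x) := by
    intro k
    induction k using Nat.strong_induction_on with
    | _ k ih =>
      intro hk hs
      refine hx' (mem_biUnion (x := (k, key k x)) ⟨hk, h.subset_of_mem hk.le (mem_cell_self _ _) hx,
        hs, ?_⟩ (mem_cell_self _ _))
      intro p' h1 h2 h3
      have : p' = (p'.1, key p'.1 x) := eq_of_mem rfl (h3 (mem_cell_self _ _)) (mem_cell_self _ _)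
      rw [this]
      exact ih _ h2 h1
  have hlim := hL.add_const (2 * mosc μ key b q)
  rw [zero_add] at hlim
  refine ge_of_tendsto hlim ((eventually_gt_atTop q.1).mono fun k hk => ?_)
  set p : ℕ × ι := (k, key k x)
  set c := avg μ key b q with hc
  have hdev : dev μ key b q p / μ (cell key p) ≤ 2 * mosc μ key b q := by
    have := not_lt.1 (hns k hk)
    rw [ENNReal.div_le_iff (h.pos p) (h.fin p), mosc, ← mul_div_assoc, ENNReal.mul_comm_div,
      ← mul_div_assoc, ENNReal.le_div_iff_mul_le (Or.inl (h.pos q)) (Or.inl (h.fin q))]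
    exact this
  refine le_trans ?_ (add_le_add_right hdev _)
  rw [← ENNReal.add_div, ENNReal.le_div_iff_mul_le (Or.inl (h.pos p)) (Or.inl (h.fin p)), dev,
    ← lintegral_add_left' (by fun_prop), ← setLIntegral_const]
  refine lintegral_mono fun y => ?_
  calc ‖b x - c‖ₑ = ‖(b y - c) - (b y - b x)‖ₑ := by congr 1; ring
    _ ≤ ‖b y - c‖ₑ + ‖b y - b x‖ₑ := enorm_sub_le
    _ = _ := add_comm _ _

lemma genUnion_succ (q₀ : ℕ × ι) (n : ℕ) :
    genUnion μ key b q₀ (n + 1) = ⋃ q ∈ gen μ key b q₀ n, childUnion μ key b q := by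
  ext x
  simp only [genUnion, gen, childUnion, mem_iUnion, mem_ofPred_eq, exists_prop]
  constructor
  · rintro ⟨p, ⟨q, hq, hc⟩, hx⟩
    exact ⟨q, hq, p, hc, hx⟩
  · rintro ⟨q, hq, p, hc, hx⟩
    exact ⟨p, ⟨q, hq, hc⟩, hx⟩

lemma genUnion_antitone (q₀ : ℕ × ι) : Antitone (genUnion μ key b q₀) := by
  refine antitone_nat_of_succ_le fun n => ?_
  rw [genUnion_succ]
  exact iUnion₂_mono fun q _ => childUnion_subset q

lemma gen_subset (q₀ : ℕ × ι) (n : ℕ) {q : ℕ × ι} (hq : q ∈ gen μ key b q₀ n) :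
    cell key q ⊆ cell key q₀ := by
  have h1 : cell key q ⊆ genUnion μ key b q₀ n := subset_biUnion_of_mem (u := cell key) hq
  have h2 := genUnion_antitone (μ := μ) (key := key) (b := b) q₀ (Nat.zero_le n)
  refine h1.trans (h2.trans ?_)
  simp [genUnion, gen]

lemma System.gen_disjoint (h : System μ key D) (q₀ : ℕ × ι) (n : ℕ) :
    (gen μ key b q₀ n).PairwiseDisjoint (cell key) := by
  induction n with
  | zero => exact pairwiseDisjoint_singleton _ _
  | succ n ih =>
    rintro p ⟨q, hq, hc⟩ p' ⟨q', hq', hc'⟩ hne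
    rcases eq_or_ne q q' with rfl | hqq
    · exact h.child_disjoint q hc hc' hne
    · exact (ih hq hq' hqq).mono hc.2.1 hc'.2.1

/-- The part of a cell of generation `n` not covered by its children avoids all of the next
generation. -/
lemma System.diff_disjoint_genUnion (h : System μ key D) (q₀ : ℕ × ι) {n : ℕ} {q : ℕ × ι}
    (hq : q ∈ gen μ key b q₀ n) :
    Disjoint (cell key q \ childUnion μ key b q) (genUnion μ key b q₀ (n + 1)) := by
  rw [genUnion_succ, Set.disjoint_left]
  rintro x ⟨hx, hx'⟩ hu
  obtain ⟨q', hq', hxq'⟩ := mem_iUnion₂.1 hu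
  rcases eq_or_ne q q' with rfl | hne
  · exact hx' hxq'
  · exact Set.disjoint_left.1 (h.gen_disjoint q₀ n hq hq' hne) hx (childUnion_subset _ hxq')

lemma System.sparse_disjoint (h : System μ key D) (q₀ : ℕ × ι) :
    (⋃ n, gen μ key b q₀ n).PairwiseDisjoint
      fun q => cell key q \ childUnion μ key b q := by
  have aux : ∀ {n m : ℕ} {q q' : ℕ × ι}, q ∈ gen μ key b q₀ n → q' ∈ gen μ key b q₀ m → n < m →
      Disjoint (cell key q \ childUnion μ key b q) (cell key q' \ childUnion μ key b q') := by
    intro n m q q' hq hq' hnm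
    refine (h.diff_disjoint_genUnion q₀ hq).mono_right ?_
    refine (sdiff_subset.trans ?_).trans (genUnion_antitone q₀ (Nat.succ_le_of_lt hnm))
    exact subset_biUnion_of_mem (u := cell key) hq'
  intro q hq q' hq' hne
  obtain ⟨n, hn⟩ := mem_iUnion.1 hq
  obtain ⟨m, hm⟩ := mem_iUnion.1 hq'
  rcases lt_trichotomy n m with hlt | rfl | hlt
  · exact aux hn hm hlt
  · exact (h.gen_disjoint q₀ n hn hm hne).mono sdiff_subset sdiff_subset
  · exact (aux hm hn hlt).symm

lemma System.measure_genUnion_le (h : System μ key D) (q₀ : ℕ × ι)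
    (hb : IntegrableOn b (cell key q₀) μ) (n : ℕ) :
    2 ^ n * μ (genUnion μ key b q₀ n) ≤ μ (cell key q₀) := by
  induction n with
  | zero => simp [genUnion, gen]
  | succ n ih =>
    refine le_trans ?_ ih
    rw [pow_succ, mul_assoc]
    gcongr
    calc 2 * μ (genUnion μ key b q₀ (n + 1))
        ≤ 2 * ∑' q : gen μ key b q₀ n, μ (childUnion μ key b q.1) := by
          rw [genUnion_succ]
          gcongr
          exact measure_biUnion_le _ (to_countable _) _
      _ = ∑' q : gen μ key b q₀ n, 2 * μ (childUnion μ key b q.1) := by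
          rw [ENNReal.tsum_mul_left]
      _ ≤ ∑' q : gen μ key b q₀ n, μ (cell key q.1) :=
          ENNReal.tsum_le_tsum fun q =>
            h.two_mul_measure_childUnion_le (hb.mono_set (gen_subset q₀ n q.2))
      _ = μ (genUnion μ key b q₀ n) :=
          (measure_biUnion (to_countable _) (h.gen_disjoint q₀ n) fun q _ => h.meas q).symm

lemma System.ae_exists_notMem (h : System μ key D) (q₀ : ℕ × ι)
    (hb : IntegrableOn b (cell key q₀) μ) :
    ∀ᵐ x ∂μ, ∃ n, x ∉ genUnion μ key b q₀ n := by
  have h0 : μ (⋂ n, genUnion μ key b q₀ n) = 0 := by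
    by_contra hne
    obtain ⟨n, hn⟩ := ENNReal.exists_nat_mul_gt hne (h.fin q₀)
    have h1 := h.measure_genUnion_le q₀ hb n
    have h2 : (n : ℝ≥0∞) * μ (⋂ n, genUnion μ key b q₀ n) ≤
        2 ^ n * μ (genUnion μ key b q₀ n) := by
      gcongr
      · exact_mod_cast Nat.lt_two_pow_self.le
      · exact iInter_subset _ n
    exact (hn.trans_le (h2.trans h1)).false
  filter_upwards [measure_eq_zero_iff_ae_notMem.1 h0] with x hx
  simpa using hx

/-- Pointwise domination along the chain of stopping cells through `x`. Restricting the sum to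
cells of generation at least that of `q` makes the induction on the length of the chain work. -/
lemma System.pointwise (h : System μ key D) (q₀ : ℕ × ι)
    (hb : IntegrableOn b (cell key q₀) μ) (hbm : AEStronglyMeasurable b μ)
    {x : X} (hL : IsLebesguePoint μ key b x) (m n : ℕ) (hx : x ∉ genUnion μ key b q₀ (n + m))
    {q : ℕ × ι} (hq : q ∈ gen μ key b q₀ n) (hxq : x ∈ cell key q) :
    ‖b x - avg μ key b q‖ₑ ≤ 2 * D * ∑' s : ℕ × ι,
      {s | s ∈ ⋃ n, gen μ key b q₀ n ∧ q.1 ≤ s.1 ∧ x ∈ cell key s}.indicator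
        (mosc μ key b) s := by
  classical
  induction m generalizing n q with
  | zero => exact absurd (mem_biUnion hq hxq) hx
  | succ m ih =>
    have hqF : q ∈ ⋃ n, gen μ key b q₀ n := mem_iUnion.2 ⟨n, hq⟩
    by_cases hxc : x ∈ childUnion μ key b q
    · obtain ⟨p, hp, hxp⟩ := mem_iUnion₂.1 hxc
      have hp : Child μ key b q p := hp
      have hpg : p ∈ gen μ key b q₀ (n + 1) := ⟨q, hq, hp⟩
      have h1 := ih (n + 1) (by rwa [add_right_comm]) hpg hxp
      have h2 := h.avg_child_le hp (hb.mono_set (gen_subset q₀ _ hpg))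
      calc ‖b x - avg μ key b q‖ₑ
          = ‖(avg μ key b p - avg μ key b q) + (b x - avg μ key b p)‖ₑ := by congr 1; ring
        _ ≤ _ := enorm_add_le _ _
        _ ≤ _ := add_le_add h2 h1
        _ = 2 * D * ∑' s : ℕ × ι, (({q} : Set (ℕ × ι)).indicator (mosc μ key b) s +
            {s | s ∈ ⋃ n, gen μ key b q₀ n ∧ p.1 ≤ s.1 ∧ x ∈ cell key s}.indicator
              (mosc μ key b) s) := by
            rw [ENNReal.tsum_add, mul_add, ← tsum_subtype {q}, tsum_singleton]
        _ ≤ _ := by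
            gcongr with s
            have hqp : q.1 < p.1 := hp.1
            by_cases hs : s = q
            · subst hs
              have hs1 : s ∉ {s | s ∈ ⋃ n, gen μ key b q₀ n ∧ p.1 ≤ s.1 ∧ x ∈ cell key s} :=
                fun hs' => absurd hs'.2.1 (not_le.2 hqp)
              have hs2 : s ∈ {s' | s' ∈ ⋃ n, gen μ key b q₀ n ∧ s.1 ≤ s'.1 ∧ x ∈ cell key s'} :=
                ⟨hqF, le_rfl, hxq⟩
              rw [indicator_of_notMem hs1, indicator_of_mem hs2, indicator_of_mem (mem_singleton s), add_zero]
            · by_cases hs' : s ∈ {s | s ∈ ⋃ n, gen μ key b q₀ n ∧ p.1 ≤ s.1 ∧ x ∈ cell key s}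
              · have hs2 : s ∈ {s | s ∈ ⋃ n, gen μ key b q₀ n ∧ q.1 ≤ s.1 ∧ x ∈ cell key s} :=
                  ⟨hs'.1, hqp.le.trans hs'.2.1, hs'.2.2⟩
                rw [indicator_of_mem hs', indicator_of_mem hs2]
                simp [hs]
              · rw [indicator_of_notMem hs']
                simp [hs]
    · calc ‖b x - avg μ key b q‖ₑ ≤ 2 * mosc μ key b q :=
            h.le_of_not_mem_childUnion hbm hxq hxc hL
        _ ≤ 2 * D * mosc μ key b q := by
            gcongr
            simpa using mul_le_mul' (le_refl (2 : ℝ≥0∞)) h.one_le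
        _ ≤ _ := by
            gcongr
            refine le_trans ?_ (ENNReal.le_tsum q)
            rw [indicator_of_mem]
            exact ⟨hqF, le_rfl, hxq⟩

/-- Sparse domination: inside the cell `q₀`, the function `b - ⟨b⟩` is controlled by a sum of mean
oscillations over a sparse family of cells. -/
theorem System.sparse_domination (h : System μ key D) (q₀ : ℕ × ι)
    (hb : IntegrableOn b (cell key q₀) μ) (hbm : AEStronglyMeasurable b μ)
    (hL : ∀ᵐ x ∂μ, IsLebesguePoint μ key b x) :
    ∃ (F : Set (ℕ × ι)) (E : ℕ × ι → Set X),
      (∀ q ∈ F, MeasurableSet (E q) ∧ E q ⊆ cell key q ∧ μ (cell key q) ≤ 2 * μ (E q)) ∧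
      F.PairwiseDisjoint E ∧
      ∀ᵐ x ∂μ, x ∈ cell key q₀ → ‖b x - avg μ key b q₀‖ₑ ≤
        2 * D * ∑' s : F, (cell key s.1).indicator (fun _ => mosc μ key b s.1) x := by
  refine ⟨⋃ n, gen μ key b q₀ n, fun q => cell key q \ childUnion μ key b q, ?_,
    h.sparse_disjoint q₀, ?_⟩
  · intro q hq
    obtain ⟨n, hn⟩ := mem_iUnion.1 hq
    exact ⟨(h.meas q).diff (h.measurableSet_childUnion q), sdiff_subset,
      h.sparse_set (hb.mono_set (gen_subset q₀ n hn))⟩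
  · filter_upwards [hL, h.ae_exists_notMem q₀ hb] with x hx ⟨m, hm⟩ hxq
    refine (h.pointwise q₀ hb hbm hx m 0 (by simpa using hm) (q := q₀) rfl hxq).trans ?_
    rw [tsum_subtype (⋃ n, gen μ key b q₀ n)
      fun s => (cell key s).indicator (fun _ => mosc μ key b s) x]
    gcongr with s
    by_cases hs : s ∈ {s | s ∈ ⋃ n, gen μ key b q₀ n ∧ q₀.1 ≤ s.1 ∧ x ∈ cell key s}
    · rw [indicator_of_mem hs, indicator_of_mem hs.1, indicator_of_mem hs.2.2]
    · rw [indicator_of_notMem hs]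
      exact zero_le

end SparseDom

/-! ### The dyadic subcubes of a centered cube -/

section Concrete

open Filter Topology SparseDom

variable {d : ℕ}

/-- The label at generation `k` of a point in the dyadic grid of `ℝ^d` of initial side length `L`
in which the cube `[-L/2, L/2)^d` is the cell with label `0` of generation `0`. -/
def dyKey (d : ℕ) (L : ℝ) (k : ℕ) (x : Euc d) : Fin d → ℤ := fun i => ⌊2 ^ k * (x i / L + 1 / 2)⌋

/-- The closed cube that is the closure of the cell with index `q` in the dyadic grid. -/
def dyCube {L : ℝ} (hL : 0 < L) (q : ℕ × (Fin d → ℤ)) : Cube d where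
  center := WithLp.toLp 2 fun i => L * ((q.2 i + 1 / 2) / 2 ^ q.1 - 1 / 2)
  side := L / 2 ^ q.1
  side_pos := by positivity

lemma mem_cell_iff {L : ℝ} (hL : 0 < L) (q : ℕ × (Fin d → ℤ)) (x : Euc d) :
    x ∈ cell (dyKey d L) q ↔ ∀ i, x i ∈ Ico ((dyCube hL q).center i - (dyCube hL q).side / 2)
      ((dyCube hL q).center i + (dyCube hL q).side / 2) := by
  have h : x ∈ cell (dyKey d L) q ↔ ∀ i, dyKey d L q.1 x i = q.2 i := funext_iff
  rw [h]
  refine forall_congr' fun i => ?_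
  have hp : (0 : ℝ) < 2 ^ q.1 := by positivity
  simp only [dyKey, Int.floor_eq_iff, dyCube, mem_Ico]
  have e1 : L * ((q.2 i + 1 / 2) / 2 ^ q.1 - 1 / 2) - L / 2 ^ q.1 / 2 =
      L / 2 ^ q.1 * q.2 i - L / 2 := by field_simp; ring
  have e2 : L * ((q.2 i + 1 / 2) / 2 ^ q.1 - 1 / 2) + L / 2 ^ q.1 / 2 =
      L / 2 ^ q.1 * (q.2 i + 1) - L / 2 := by field_simp; ring
  have e3 : x i = L / 2 ^ q.1 * (2 ^ q.1 * (x i / L + 1 / 2)) - L / 2 := by field_simp; ring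
  have hpos : 0 < L / 2 ^ q.1 := by positivity
  rw [e1, e2]
  generalize 2 ^ q.1 * (x i / L + 1 / 2) = w at e3 ⊢
  rw [e3, sub_le_sub_iff_right, sub_lt_sub_iff_right, mul_le_mul_iff_right₀ hpos,
    mul_lt_mul_iff_right₀ hpos]

lemma cell_eq_preimage {L : ℝ} (hL : 0 < L) (q : ℕ × (Fin d → ℤ)) :
    cell (dyKey d L) q = (fun x : Euc d => (WithLp.ofLp x : Fin d → ℝ)) ⁻¹'
      (Set.univ.pi fun i => Ico ((dyCube hL q).center i - (dyCube hL q).side / 2)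
        ((dyCube hL q).center i + (dyCube hL q).side / 2)) := by
  ext x
  rw [mem_cell_iff hL]
  simp

lemma measurableSet_cell {L : ℝ} (hL : 0 < L) (q : ℕ × (Fin d → ℤ)) :
    MeasurableSet (cell (dyKey d L) q) := by
  rw [cell_eq_preimage hL]
  exact (PiLp.volume_preserving_ofLp (Fin d)).measurable
    (MeasurableSet.univ_pi fun i => measurableSet_Ico)

lemma volume_cell {L : ℝ} (hL : 0 < L) (q : ℕ × (Fin d → ℤ)) :
    volume (cell (dyKey d L) q) = volume (dyCube hL q).carrier := by
  rw [volume_carrier, cell_eq_preimage hL,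
    (PiLp.volume_preserving_ofLp (Fin d)).measure_preimage
    (MeasurableSet.univ_pi fun i => measurableSet_Ico).nullMeasurableSet, volume_pi_pi]
  simp only [Real.volume_Ico]
  simp

lemma cell_subset_carrier {L : ℝ} (hL : 0 < L) (q : ℕ × (Fin d → ℤ)) :
    cell (dyKey d L) q ⊆ (dyCube hL q).carrier := by
  intro x hx i
  have := (mem_cell_iff hL q x).1 hx i
  rw [abs_le]
  constructor <;> linarith [this.1, this.2]

lemma cell_ae_eq {L : ℝ} (hL : 0 < L) (q : ℕ × (Fin d → ℤ)) :
    cell (dyKey d L) q =ᵐ[volume] (dyCube hL q).carrier :=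
  ae_eq_of_subset_of_measure_ge (cell_subset_carrier hL q) (volume_cell hL q).ge
    (measurableSet_cell hL q).nullMeasurableSet (volume_carrier_ne_top _)

lemma dyCube_injective {L : ℝ} (hL : 0 < L) : Function.Injective (dyCube (d := d) hL) := by
  intro p q h
  have hs : L / 2 ^ p.1 = L / 2 ^ q.1 := congrArg Cube.side h
  have h1 : p.1 = q.1 := by
    have hs : (2 : ℝ) ^ p.1 = 2 ^ q.1 := by
      field_simp at hs
      exact hs.symm
    exact pow_right_injective₀ (by norm_num : (0 : ℝ) < 2) (by norm_num) hs
  obtain ⟨x, hx⟩ : (cell (dyKey d L) p).Nonempty := nonempty_of_measure_ne_zero (μ := volume) (by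
    rw [volume_cell hL]; exact volume_carrier_ne_zero _)
  refine eq_of_mem (key := dyKey d L) h1 hx ?_
  rw [mem_cell_iff hL] at hx ⊢
  rwa [h] at hx

lemma floor_nested {u v : ℝ} (h : ⌊2 * u⌋ = ⌊2 * v⌋) : ⌊u⌋ = ⌊v⌋ := by
  have key : ∀ w : ℝ, ⌊w⌋ = ⌊2 * w⌋ / 2 := by
    intro w
    have h1 : 2 * ⌊w⌋ ≤ ⌊2 * w⌋ := Int.le_floor.2 (by push_cast; linarith [Int.floor_le w])
    have h2 : ⌊2 * w⌋ < 2 * ⌊w⌋ + 2 :=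
      Int.floor_lt.2 (by push_cast; linarith [Int.lt_floor_add_one w])
    omega
  rw [key u, key v, h]

lemma dySystem {L : ℝ} (hL : 0 < L) :
    System (volume : Measure (Euc d)) (dyKey d L) (2 ^ d) where
  one_le := one_le_pow₀ (by norm_num)
  nested k x y h := by
    funext i
    refine floor_nested ?_
    have := congrFun h i
    simp only [dyKey, pow_succ'] at this
    simpa only [mul_assoc] using this
  meas := measurableSet_cell hL
  pos q := by rw [volume_cell hL]; exact volume_carrier_ne_zero _
  fin q := by rw [volume_cell hL]; exact volume_carrier_ne_top _
  doubling q p h := by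
    rw [volume_cell hL, volume_cell hL, volume_carrier, volume_carrier, ← mul_pow]
    have h2 : (2 : ℝ≥0∞) = ENNReal.ofReal 2 := by simp
    rw [h2, ← ENNReal.ofReal_mul (by norm_num)]
    gcongr
    simp only [dyCube, h, pow_succ']
    apply le_of_eq
    field_simp

lemma avg_eq_cubeAvg {L : ℝ} (hL : 0 < L) (b : Euc d → ℂ) (q : ℕ × (Fin d → ℤ)) :
    avg volume (dyKey d L) b q = cubeAvg b (dyCube hL q) := by
  rw [avg, setAverage_eq, cubeAvg, setIntegral_congr_set (cell_ae_eq hL q), Measure.real,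
    volume_cell hL]

/-- Dyadic cells shrink to a point at a comparable rate to Euclidean balls, so almost every point
is a Lebesgue point along the cells. -/
lemma ae_isLebesguePoint {L : ℝ} (hL : 0 < L) {b : Euc d → ℂ} (hb : LocallyIntegrable b volume) :
    ∀ᵐ x, IsLebesguePoint volume (dyKey d L) b x := by
  filter_upwards [IsUnifLocDoublingMeasure.ae_tendsto_average_norm_sub volume hb 1] with x hx
  set δ : ℕ → ℝ := fun k => (d + 1) * (L / 2 ^ k) with hδ
  have hδpos : ∀ k, 0 < δ k := fun k => by positivity
  have hδlim : Tendsto δ atTop (𝓝[>] 0) := by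
    refine tendsto_nhdsWithin_iff.2 ⟨?_, Eventually.of_forall hδpos⟩
    have h1 : Tendsto (fun k : ℕ => (d + 1) * L * (1 / 2 : ℝ) ^ k) atTop (𝓝 ((d + 1) * L * 0)) :=
      (_root_.tendsto_pow_atTop_nhds_zero_of_lt_one (by norm_num) (by norm_num)).const_mul _
    rw [mul_zero] at h1
    refine h1.congr fun k => ?_
    simp only [hδ, one_div, inv_pow]
    ring
  have hlim := hx (fun _ => x) δ hδlim
    (Eventually.of_forall fun k => Metric.mem_closedBall_self (by have := hδpos k; positivity))
  have hlim2 : Tendsto (fun k => ENNReal.ofReal (2 * (d + 1)) ^ d *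
      ENNReal.ofReal (⨍ y in Metric.closedBall x (δ k), ‖b y - b x‖)) atTop (𝓝 0) := by
    have := ENNReal.Tendsto.const_mul (a := ENNReal.ofReal (2 * (d + 1)) ^ d)
      (ENNReal.tendsto_ofReal hlim) (Or.inr (by finiteness))
    simpa using this
  refine tendsto_of_tendsto_of_tendsto_of_le_of_le tendsto_const_nhds hlim2 (fun _ => zero_le)
    fun k => ?_
  set q : ℕ × (Fin d → ℤ) := (k, dyKey d L k x) with hq
  set B := Metric.closedBall x (δ k) with hB
  have hside : (dyCube hL q).side = L / 2 ^ k := rfl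
  have hsub : cell (dyKey d L) q ⊆ B := by
    intro y hy
    have h1 := (mem_cell_iff hL q y).1 hy
    have h2 := (mem_cell_iff hL q x).1 (mem_cell_self k x)
    rw [hB, Metric.mem_closedBall, EuclideanSpace.dist_eq]
    refine Real.sqrt_le_iff.2 ⟨(hδpos k).le, ?_⟩
    calc ∑ i, dist (y i) (x i) ^ 2 ≤ ∑ i : Fin d, (L / 2 ^ k) ^ 2 := by
          refine Finset.sum_le_sum fun i _ => ?_
          refine pow_le_pow_left₀ dist_nonneg ?_ 2
          rw [Real.dist_eq, abs_le, ← hside]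
          constructor <;> linarith [(h1 i).1, (h1 i).2, (h2 i).1, (h2 i).2]
      _ = d * (L / 2 ^ k) ^ 2 := by simp
      _ ≤ δ k ^ 2 := by
          rw [hδ, mul_pow]
          gcongr
          nlinarith [Nat.cast_nonneg (α := ℝ) d]
  have hBvol : volume B ≤ ENNReal.ofReal (2 * (d + 1)) ^ d * volume (cell (dyKey d L) q) := by
    have hBs : B ⊆ (⟨x, 2 * δ k, by have := hδpos k; positivity⟩ : Cube d).carrier := by
      intro y hy i
      have h1 : ‖(y - x) i‖ ≤ ‖y - x‖ := PiLp.norm_apply_le _ _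
      have h2 : ‖y - x‖ ≤ δ k := by rwa [← dist_eq_norm]
      simp only [PiLp.sub_apply, Real.norm_eq_abs] at h1
      simp only
      linarith
    refine (measure_mono hBs).trans ?_
    rw [volume_cell hL, volume_carrier, volume_carrier, ← mul_pow,
      ← ENNReal.ofReal_mul (by positivity), hside]
    simp only [hδ, mul_assoc]
    exact le_rfl
  have hBpos : volume B ≠ 0 := (Metric.measure_closedBall_pos volume x (hδpos k)).ne'
  have hBfin : volume B ≠ ∞ := measure_closedBall_lt_top.ne
  have hbint : IntegrableOn (fun y => b y - b x) B :=
    (hb.integrableOn_isCompact (isCompact_closedBall _ _)).sub (integrableOn_const hBfin)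
  have havg : ENNReal.ofReal (⨍ y in B, ‖b y - b x‖) =
      (∫⁻ y in B, ‖b y - b x‖ₑ) / volume B := by
    rw [setAverage_eq, smul_eq_mul, ENNReal.ofReal_mul (by positivity), Measure.real,
      ENNReal.ofReal_inv_of_pos (ENNReal.toReal_pos hBpos hBfin), ENNReal.ofReal_toReal hBfin,
      ENNReal.div_eq_inv_mul, ofReal_integral_norm_eq_lintegral_enorm hbint]
  rw [havg, ENNReal.div_le_iff ((dySystem hL).pos q) ((dySystem hL).fin q)]
  calc ∫⁻ y in cell (dyKey d L) q, ‖b y - b x‖ₑ ≤ ∫⁻ y in B, ‖b y - b x‖ₑ :=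
        lintegral_mono_set hsub
    _ = (∫⁻ y in B, ‖b y - b x‖ₑ) / volume B * volume B :=
        (ENNReal.div_mul_cancel hBpos hBfin).symm
    _ ≤ (∫⁻ y in B, ‖b y - b x‖ₑ) / volume B *
        (ENNReal.ofReal (2 * (d + 1)) ^ d * volume (cell (dyKey d L) q)) := by gcongr
    _ = _ := by ring

end Concrete

/-! ### Oscillation over cubes and the upper bound -/

lemma IsSparse.mono {d : ℕ} {𝒮 𝒯 : Set (Cube d)} (h : IsSparse 𝒮) (hs : 𝒯 ⊆ 𝒮) : IsSparse 𝒯 := by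
  obtain ⟨hc, E, hE, hdisj⟩ := h
  exact ⟨hc.mono hs, E, fun Q hQ => hE Q (hs hQ), hdisj.subset hs⟩

lemma isCompact_carrier {d : ℕ} (Q : Cube d) : IsCompact Q.carrier := by
  rw [carrier_eq_preimage]
  exact (PiLp.homeomorph 2 fun _ : Fin d => ℝ).isCompact_preimage.2
    (isCompact_univ_pi fun i => isCompact_Icc)

/-- The oscillation `∫_Q |b - ⟨b⟩_Q|`, valued in `[0,∞]`. -/
def cubeOsc {d : ℕ} (b : Euc d → ℂ) (Q : Cube d) : ℝ≥0∞ :=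
  ∫⁻ x in Q.carrier, ‖b x - cubeAvg b Q‖ₑ

lemma integrableOn_sub_const {d : ℕ} {b : Euc d → ℂ} (hb : LocallyIntegrable b volume) (c : ℂ)
    (Q : Cube d) : IntegrableOn (fun x => b x - c) Q.carrier :=
  (hb.integrableOn_isCompact (isCompact_carrier Q)).sub
    (integrableOn_const (volume_carrier_ne_top Q))

lemma cubeOsc_ne_top {d : ℕ} {b : Euc d → ℂ} (hb : LocallyIntegrable b volume) (Q : Cube d) :
    cubeOsc b Q ≠ ∞ :=
  (integrableOn_sub_const hb _ Q).2.ne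

lemma ofReal_mul_osc {d : ℕ} {b : Euc d → ℂ} (hb : LocallyIntegrable b volume) (Q : Cube d)
    {l : ℝ} (hl : 0 ≤ l) :
    ENNReal.ofReal (l * ∫ x in Q.carrier, ‖b x - cubeAvg b Q‖) =
      ENNReal.ofReal l * cubeOsc b Q := by
  rw [ENNReal.ofReal_mul hl,
    ofReal_integral_norm_eq_lintegral_enorm (integrableOn_sub_const hb _ Q), cubeOsc]

/-- The mean is an almost optimal constant for the mean oscillation. -/
lemma cubeOsc_le {d : ℕ} {b : Euc d → ℂ} (hb : LocallyIntegrable b volume) (c : ℂ) (Q : Cube d) :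
    cubeOsc b Q ≤ 2 * ∫⁻ x in Q.carrier, ‖b x - c‖ₑ := by
  have h0 := volume_carrier_ne_zero Q
  have ht := volume_carrier_ne_top Q
  have hpos : 0 < (volume Q.carrier).toReal := ENNReal.toReal_pos h0 ht
  have hE : cubeAvg b Q - c = (volume Q.carrier).toReal⁻¹ • ∫ x in Q.carrier, (b x - c) := by
    rw [integral_sub (hb.integrableOn_isCompact (isCompact_carrier Q)) (integrableOn_const ht),
      setIntegral_const, smul_sub, smul_smul, Measure.real,
      inv_mul_cancel₀ hpos.ne', one_smul, cubeAvg]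
  have hc : ‖c - cubeAvg b Q‖ₑ ≤ (volume Q.carrier)⁻¹ * ∫⁻ x in Q.carrier, ‖b x - c‖ₑ := by
    rw [← enorm_neg, neg_sub, hE, enorm_smul]
    gcongr
    · rw [enorm_inv hpos.ne', Real.enorm_eq_ofReal hpos.le, ENNReal.ofReal_toReal ht]
    · exact enorm_integral_le_lintegral_enorm _
  calc cubeOsc b Q ≤ ∫⁻ x in Q.carrier, (‖b x - c‖ₑ + ‖c - cubeAvg b Q‖ₑ) := by
        refine lintegral_mono fun x => ?_
        have : b x - cubeAvg b Q = (b x - c) + (c - cubeAvg b Q) := by ring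
        rw [this]
        exact enorm_add_le _ _
    _ = (∫⁻ x in Q.carrier, ‖b x - c‖ₑ) + ‖c - cubeAvg b Q‖ₑ * volume Q.carrier := by
        rw [lintegral_add_right _ measurable_const, setLIntegral_const]
    _ ≤ (∫⁻ x in Q.carrier, ‖b x - c‖ₑ) +
        (volume Q.carrier)⁻¹ * (∫⁻ x in Q.carrier, ‖b x - c‖ₑ) * volume Q.carrier := by gcongr
    _ = 2 * ∫⁻ x in Q.carrier, ‖b x - c‖ₑ := by
        rw [mul_right_comm, ENNReal.inv_mul_cancel h0 ht, one_mul, two_mul]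

lemma eLpNorm_ofReal {d : ℕ} {r : ℝ} (hr : 1 < r) (f : Euc d → ℂ) :
    eLpNorm f (ENNReal.ofReal r) volume = (∫⁻ x, ‖f x‖ₑ ^ r) ^ (1 / r) := by
  have h0 : 0 < r := by linarith
  rw [eLpNorm_eq_lintegral_rpow_enorm_toReal (by simpa using h0) ofReal_ne_top,
    ENNReal.toReal_ofReal h0.le]

/-- The upper bound for a finite sparse family: Hölder's inequality followed by the Carleson
embedding. -/
lemma upper_finite {d : ℕ} {r r' : ℝ} (hr : r'.HolderConjugate r) {b : Euc d → ℂ}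
    (hb : LocallyIntegrable b volume) {T : Finset (Cube d)} (hT : IsSparse (T : Set (Cube d)))
    {a : Cube d → ℝ≥0∞} (ha : ∑ Q ∈ T, volume Q.carrier * a Q ^ r' ≤ 1) (c : ℂ) :
    ∑ Q ∈ T, a Q * cubeOsc b Q ≤
      2 * carlesonConst d r ^ (1 / r) *
        eLpNorm (fun x => b x - c) (ENNReal.ofReal r) volume := by
  have hr1 : 1 < r := hr.symm.lt
  have h0r : 0 ≤ 1 / r := by have := hr.symm.nonneg; positivity
  have h0r' : 0 ≤ 1 / r' := by have := hr.nonneg; positivity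
  set f : Euc d → ℝ≥0∞ := fun x => ‖b x - c‖ₑ with hf
  have hfm : AEMeasurable f := (hb.aestronglyMeasurable.sub aestronglyMeasurable_const).enorm
  have hterm : ∀ Q : Cube d, a Q * cubeOsc b Q ≤
      2 * ((volume Q.carrier ^ (1 / r') * a Q) * (volume Q.carrier ^ (1 / r) * lavg f Q)) := by
    intro Q
    have h0 := volume_carrier_ne_zero Q
    have ht := volume_carrier_ne_top Q
    have hv : volume Q.carrier ^ (1 / r') * volume Q.carrier ^ (1 / r) = volume Q.carrier := by
      rw [← ENNReal.rpow_add _ _ h0 ht, one_div, one_div, hr.inv_add_inv_eq_one,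
        ENNReal.rpow_one]
    calc a Q * cubeOsc b Q ≤ a Q * (2 * ∫⁻ x in Q.carrier, f x) := by
          gcongr; exact cubeOsc_le hb c Q
      _ = a Q * (2 * (volume Q.carrier * lavg f Q)) := by
          rw [lavg, ENNReal.mul_div_cancel h0 ht]
      _ = a Q * (2 * (volume Q.carrier ^ (1 / r') * volume Q.carrier ^ (1 / r) * lavg f Q)) := by
          rw [hv]
      _ = _ := by ring
  have hpow : ∀ {p : ℝ}, 0 < p → ∀ v w : ℝ≥0∞, (v ^ (1 / p) * w) ^ p = v * w ^ p := by
    intro p hp v w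
    rw [ENNReal.mul_rpow_of_nonneg _ _ hp.le, ← ENNReal.rpow_mul, one_div_mul_cancel hp.ne',
      ENNReal.rpow_one]
  calc ∑ Q ∈ T, a Q * cubeOsc b Q
      ≤ ∑ Q ∈ T, 2 * ((volume Q.carrier ^ (1 / r') * a Q) *
          (volume Q.carrier ^ (1 / r) * lavg f Q)) := Finset.sum_le_sum fun Q _ => hterm Q
    _ = 2 * ∑ Q ∈ T, (volume Q.carrier ^ (1 / r') * a Q) *
          (volume Q.carrier ^ (1 / r) * lavg f Q) := by rw [Finset.mul_sum]
    _ ≤ 2 * ((∑ Q ∈ T, (volume Q.carrier ^ (1 / r') * a Q) ^ r') ^ (1 / r') *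
          (∑ Q ∈ T, (volume Q.carrier ^ (1 / r) * lavg f Q) ^ r) ^ (1 / r)) := by
        gcongr
        exact ENNReal.inner_le_Lp_mul_Lq _ _ _ hr
    _ ≤ 2 * (1 ^ (1 / r') * (carlesonConst d r * ∫⁻ x, f x ^ r) ^ (1 / r)) := by
        simp only [hpow hr.pos, hpow hr.symm.pos]
        gcongr
        exact carleson hT hfm hr1
    _ = _ := by
        rw [ENNReal.one_rpow, one_mul, ENNReal.mul_rpow_of_nonneg _ _ h0r, eLpNorm_ofReal hr1,
          mul_assoc]

lemma ofReal_volume_mul {d : ℕ} (Q : Cube d) {l s : ℝ} (hl : 0 ≤ l) (hs : 0 ≤ s) :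
    ENNReal.ofReal ((volume Q.carrier).toReal * l ^ s) =
      volume Q.carrier * ENNReal.ofReal l ^ s := by
  rw [ENNReal.ofReal_mul ENNReal.toReal_nonneg, ENNReal.ofReal_toReal (volume_carrier_ne_top Q),
    ENNReal.ofReal_rpow_of_nonneg hl hs]

lemma upper_bound {d : ℕ} {r r' : ℝ} (hr : r'.HolderConjugate r) {b : Euc d → ℂ}
    (hb : LocallyIntegrable b volume) {𝒮 : Set (Cube d)} {lam : Cube d → ℝ} (hS : IsSparse 𝒮)
    (hlam : ∀ Q, 0 ≤ lam Q)
    (hsum : ∑' Q : 𝒮, ENNReal.ofReal ((volume Q.1.carrier).toReal * lam Q.1 ^ r') ≤ 1) :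
    ∑' Q : 𝒮, ENNReal.ofReal (lam Q.1 * ∫ x in Q.1.carrier, ‖b x - cubeAvg b Q.1‖) ≤
      2 * carlesonConst d r ^ (1 / r) * dotLrNorm r b := by
  have hK : 2 * carlesonConst d r ^ (1 / r) ≠ ∞ := ENNReal.mul_ne_top (by norm_num)
    (ENNReal.rpow_ne_top_of_nonneg (by have := hr.symm.nonneg; positivity)
      (carlesonConst_ne_top d hr.symm.lt))
  rw [dotLrNorm, ENNReal.mul_iInf fun h => absurd h hK]
  refine le_iInf fun c => ?_
  rw [ENNReal.tsum_eq_iSup_sum]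
  refine iSup_le fun T => ?_
  set T' : Finset (Cube d) := T.map (Function.Embedding.subtype _) with hT'
  have hTS : (T' : Set (Cube d)) ⊆ 𝒮 := by
    intro Q hQ
    simp only [hT', Finset.coe_map, Set.mem_image] at hQ
    obtain ⟨P, -, rfl⟩ := hQ
    exact P.2
  have h := upper_finite hr hb (hS.mono hTS) (a := fun Q => ENNReal.ofReal (lam Q)) (by
    refine le_trans ?_ hsum
    refine le_trans (le_of_eq ?_) (ENNReal.sum_le_tsum T)
    rw [hT', Finset.sum_map]
    exact Finset.sum_congr rfl fun Q _ => (ofReal_volume_mul Q.1 (hlam _) hr.nonneg).symm) c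
  rw [hT', Finset.sum_map] at h
  refine le_trans (le_of_eq ?_) h
  exact Finset.sum_congr rfl fun Q _ => ofReal_mul_osc hb Q.1 (hlam _)

/-! ### Duality for sparse sums -/

/-- The sparse sum `∑_{Q ∈ T} (⨍_Q |b - ⟨b⟩_Q|) 1_Q` of a finite family of cubes. -/
def sparseSum {d : ℕ} (b : Euc d → ℂ) (T : Finset (Cube d)) (x : Euc d) : ℝ≥0∞ :=
  ∑ Q ∈ T, Q.carrier.indicator (fun _ => cubeOsc b Q / volume Q.carrier) x

lemma measurable_sparseSum {d : ℕ} (b : Euc d → ℂ) (T : Finset (Cube d)) :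
    Measurable (sparseSum b T) :=
  Finset.measurable_fun_sum _ fun Q _ => measurable_const.indicator (measurableSet_carrier Q)

lemma lintegral_sparseSum_mul {d : ℕ} (b : Euc d → ℂ) (T : Finset (Cube d)) {g : Euc d → ℝ≥0∞}
    (hg : Measurable g) :
    ∫⁻ x, sparseSum b T x * g x = ∑ Q ∈ T, lavg g Q * cubeOsc b Q := by
  simp only [sparseSum, Finset.sum_mul]
  rw [lintegral_finsetSum _ fun Q _ =>
    (measurable_const.indicator (measurableSet_carrier Q)).fun_mul hg]
  refine Finset.sum_congr rfl fun Q _ => ?_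
  have : ∀ x, Q.carrier.indicator (fun _ => cubeOsc b Q / volume Q.carrier) x * g x =
      Q.carrier.indicator (fun x => cubeOsc b Q / volume Q.carrier * g x) x := fun x => by
    by_cases hx : x ∈ Q.carrier <;> simp [hx]
  simp only [this]
  rw [lintegral_indicator (measurableSet_carrier Q), lintegral_const_mul _ hg, lavg,
    ENNReal.div_eq_inv_mul, ENNReal.div_eq_inv_mul]
  ring

lemma rpow_eq_mul_rpow_sub_one {r : ℝ} (hr : 1 < r) (y : ℝ≥0∞) : y ^ r = y * y ^ (r - 1) := by
  nth_rewrite 2 [← ENNReal.rpow_one y]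
  rw [← ENNReal.rpow_add_of_nonneg _ _ zero_le_one (by linarith : 0 ≤ r - 1)]
  congr 1
  ring

lemma lintegral_sparseSum_rpow_ne_top {d : ℕ} {b : Euc d → ℂ} (hb : LocallyIntegrable b volume)
    (T : Finset (Cube d)) {r : ℝ} (hr : 1 < r) : ∫⁻ x, sparseSum b T x ^ r ≠ ∞ := by
  set M : ℝ≥0∞ := ∑ Q ∈ T, cubeOsc b Q / volume Q.carrier with hM
  have hMt : M ≠ ∞ := by
    rw [hM, ENNReal.sum_ne_top]
    exact fun Q _ => ENNReal.div_ne_top (cubeOsc_ne_top hb Q) (volume_carrier_ne_zero Q)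
  have hle : ∀ x, sparseSum b T x ≤ M := fun x =>
    Finset.sum_le_sum fun Q _ => indicator_le_self' (fun _ _ => zero_le) x
  have hbound : ∀ x, sparseSum b T x ^ r ≤ sparseSum b T x * M ^ (r - 1) := fun x => by
    rw [rpow_eq_mul_rpow_sub_one hr]
    gcongr
    exact hle x
  refine ne_top_of_le_ne_top ?_ (lintegral_mono hbound)
  rw [lintegral_sparseSum_mul b T measurable_const, ENNReal.sum_ne_top]
  refine fun Q _ => ENNReal.mul_ne_top ?_ (cubeOsc_ne_top hb Q)
  rw [lavg, setLIntegral_const]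
  exact ENNReal.div_ne_top (ENNReal.mul_ne_top
    (ENNReal.rpow_ne_top_of_nonneg (by linarith) hMt) (volume_carrier_ne_top Q))
    (volume_carrier_ne_zero Q)

lemma carlesonConst_ne_zero (d : ℕ) {p : ℝ} (hp : 1 < p) : carlesonConst d p ≠ 0 := by
  have h1 : 0 < p / (p - 1) := div_pos (by linarith) (by linarith)
  have h2 : ¬ p < 0 := by linarith
  simp [carlesonConst, ENNReal.rpow_eq_zero_iff, h1, h2]

/-- Testing the sparse sum `F` against `F ^ (r - 1)`: the averages of `F ^ (r - 1)` over the cubes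
are, after normalisation, admissible coefficients by the Carleson embedding. -/
lemma duality {d : ℕ} {r r' : ℝ} (hr : r.HolderConjugate r') {b : Euc d → ℂ}
    (hb : LocallyIntegrable b volume) {T : Finset (Cube d)} (hT : IsSparse (T : Set (Cube d)))
    {N : ℝ≥0∞}
    (hN : ∀ lam : Cube d → ℝ, (∀ Q, 0 ≤ lam Q) →
      ∑ Q ∈ T, volume Q.carrier * ENNReal.ofReal (lam Q) ^ r' ≤ 1 →
      ∑ Q ∈ T, ENNReal.ofReal (lam Q) * cubeOsc b Q ≤ N) :
    ∫⁻ x, sparseSum b T x ^ r ≤ (carlesonConst d r' ^ (1 / r') * N) ^ r := by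
  have hr1 : 1 < r := hr.lt
  have hr1' : 1 < r' := hr.symm.lt
  have hr0' : 0 < r' := hr.symm.pos
  set A := ∫⁻ x, sparseSum b T x ^ r with hA
  have hAt : A ≠ ∞ := lintegral_sparseSum_rpow_ne_top hb T hr1
  rcases eq_or_ne A 0 with hA0 | hA0
  · rw [hA0]; exact zero_le
  set g : Euc d → ℝ≥0∞ := fun x => sparseSum b T x ^ (r - 1) with hg
  have hgm : Measurable g := (measurable_sparseSum b T).pow_const _
  have hgr : ∫⁻ x, g x ^ r' = A := by
    simp only [hg, ← ENNReal.rpow_mul, hr.sub_one_mul_conj, hA]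
  have hAsum : A = ∑ Q ∈ T, lavg g Q * cubeOsc b Q := by
    rw [← lintegral_sparseSum_mul b T hgm, hA]
    exact lintegral_congr fun x => rpow_eq_mul_rpow_sub_one hr1 _
  set t := (carlesonConst d r' * A) ^ (1 / r') with ht
  have hCA0 : carlesonConst d r' * A ≠ 0 := mul_ne_zero (carlesonConst_ne_zero d hr1') hA0
  have hCAt : carlesonConst d r' * A ≠ ∞ := ENNReal.mul_ne_top (carlesonConst_ne_top d hr1') hAt
  have ht0 : t ≠ 0 := by
    rw [ht, Ne, ENNReal.rpow_eq_zero_iff_of_pos (by positivity)]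
    exact hCA0
  have htt : t ≠ ∞ := ENNReal.rpow_ne_top_of_nonneg (by positivity) hCAt
  have htr : t ^ r' = carlesonConst d r' * A := by
    rw [ht, ← ENNReal.rpow_mul, one_div_mul_cancel hr0'.ne', ENNReal.rpow_one]
  have hG : ∀ Q, lavg g Q ≠ ∞ := lavg_ne_top hr1' (by rw [hgr]; exact hAt)
  have hlam : ∀ Q, ENNReal.ofReal (lavg g Q / t).toReal = lavg g Q * t⁻¹ := fun Q =>
    ENNReal.ofReal_toReal (ENNReal.div_ne_top (hG Q) ht0)
  have h := hN (fun Q => (lavg g Q / t).toReal) (fun Q => ENNReal.toReal_nonneg) (by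
    simp only [hlam, ENNReal.mul_rpow_of_nonneg _ _ hr0'.le, ← mul_assoc]
    rw [← Finset.sum_mul]
    calc _ ≤ carlesonConst d r' * (∫⁻ x, g x ^ r') * t⁻¹ ^ r' := by
          gcongr
          exact carleson hT hgm.aemeasurable hr1'
      _ = 1 := by
          rw [hgr, ENNReal.inv_rpow, htr, ENNReal.mul_inv_cancel hCA0 hCAt])
  have h2 : A * t⁻¹ ≤ N := by
    rw [hAsum, Finset.sum_mul]
    refine le_trans (le_of_eq (Finset.sum_congr rfl fun Q _ => ?_)) h
    simp only [hlam]
    ring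
  have h3 : A ≤ carlesonConst d r' ^ (1 / r') * N * 1 ^ (1 / r) * A ^ (1 / r') := by
    calc A = A * t⁻¹ * t := by rw [mul_assoc, ENNReal.inv_mul_cancel ht0 htt, mul_one]
      _ ≤ N * t := by gcongr
      _ = _ := by
        rw [ht, ENNReal.mul_rpow_of_nonneg _ _ (by positivity), ENNReal.one_rpow]
        ring
  simpa using absorb hr hAt h3

/-- The quantity dual to `‖b‖_{∙L^r}`: the supremum of the sparse sums with admissible
coefficients. -/
def sparseSup {d : ℕ} (r' : ℝ) (b : Euc d → ℂ) : ℝ≥0∞ :=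
  ⨆ (𝒮 : Set (Cube d)) (lam : Cube d → ℝ) (_ : IsSparse 𝒮) (_ : ∀ Q, 0 ≤ lam Q)
    (_ : ∑' Q : 𝒮, ENNReal.ofReal ((volume Q.1.carrier).toReal * lam Q.1 ^ r') ≤ 1),
    ∑' Q : 𝒮, ENNReal.ofReal (lam Q.1 * ∫ x in Q.1.carrier, ‖b x - cubeAvg b Q.1‖)

lemma duality_finite {d : ℕ} {r r' : ℝ} (hr : r.HolderConjugate r') {b : Euc d → ℂ}
    (hb : LocallyIntegrable b volume) {T : Finset (Cube d)} (hT : IsSparse (T : Set (Cube d))) :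
    ∫⁻ x, sparseSum b T x ^ r ≤ (carlesonConst d r' ^ (1 / r') * sparseSup r' b) ^ r := by
  refine duality hr hb hT fun lam hlam hsum => ?_
  have h1 : ∑' Q : (T : Set (Cube d)),
      ENNReal.ofReal ((volume Q.1.carrier).toReal * lam Q.1 ^ r') ≤ 1 := by
    rw [Finset.tsum_subtype' T
      fun Q => ENNReal.ofReal ((volume Q.carrier).toReal * lam Q ^ r')]
    simpa only [ofReal_volume_mul _ (hlam _) hr.symm.nonneg] using hsum
  have h2 : ∑' Q : (T : Set (Cube d)),
      ENNReal.ofReal (lam Q.1 * ∫ x in Q.1.carrier, ‖b x - cubeAvg b Q.1‖) =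
      ∑ Q ∈ T, ENNReal.ofReal (lam Q) * cubeOsc b Q := by
    rw [Finset.tsum_subtype' T
      fun Q => ENNReal.ofReal (lam Q * ∫ x in Q.carrier, ‖b x - cubeAvg b Q‖)]
    exact Finset.sum_congr rfl fun Q _ => ofReal_mul_osc hb Q (hlam Q)
  rw [← h2]
  exact le_iSup_of_le (T : Set (Cube d)) <| le_iSup_of_le lam <| le_iSup_of_le hT <|
    le_iSup_of_le hlam <| le_iSup_of_le h1 le_rfl

/-- Passage to countable sparse families by monotone convergence. -/
lemma duality_tsum {d : ℕ} {r r' : ℝ} (hr : r.HolderConjugate r') {b : Euc d → ℂ}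
    (hb : LocallyIntegrable b volume) {𝒮 : Set (Cube d)} (hS : IsSparse 𝒮) :
    ∫⁻ x, (∑' Q : 𝒮, Q.1.carrier.indicator (fun _ => cubeOsc b Q.1 / volume Q.1.carrier) x) ^ r ≤
      (carlesonConst d r' ^ (1 / r') * sparseSup r' b) ^ r := by
  have : Countable 𝒮 := hS.1.to_subtype
  have e : ∀ (T : Finset 𝒮) (x : Euc d),
      ∑ Q ∈ T, Q.1.carrier.indicator (fun _ => cubeOsc b Q.1 / volume Q.1.carrier) x =
        sparseSum b (T.map (Function.Embedding.subtype _)) x := fun T x => by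
    rw [sparseSum, Finset.sum_map]
    rfl
  have e2 : ∀ x : Euc d,
      (∑' Q : 𝒮, Q.1.carrier.indicator (fun _ => cubeOsc b Q.1 / volume Q.1.carrier) x) ^ r =
        ⨆ T : Finset 𝒮, sparseSum b (T.map (Function.Embedding.subtype _)) x ^ r := fun x => by
    rw [ENNReal.tsum_eq_iSup_sum]
    simp only [e]
    exact (ENNReal.orderIsoRpow r hr.pos).map_iSup _
  simp only [e2]
  rw [lintegral_iSup_directed
    (fun T => ((measurable_sparseSum b _).pow_const r).aemeasurable)]
  · refine iSup_le fun T => duality_finite hr hb (hS.mono ?_)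
    intro Q hQ
    simp only [Finset.coe_map, Set.mem_image] at hQ
    obtain ⟨P, -, rfl⟩ := hQ
    exact P.2
  · refine Monotone.directed_le fun S T hST x => ?_
    refine ENNReal.rpow_le_rpow ?_ hr.nonneg
    rw [← e, ← e]
    exact Finset.sum_le_sum_of_subset hST

/-! ### The lower bound -/

section Lower

open Filter Topology SparseDom

variable {d : ℕ}

lemma mosc_eq {L : ℝ} (hL : 0 < L) (b : Euc d → ℂ) (q : ℕ × (Fin d → ℤ)) :
    mosc volume (dyKey d L) b q =
      cubeOsc b (dyCube hL q) / volume (dyCube hL q).carrier := by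
  rw [mosc, dev, cubeOsc, volume_cell hL, avg_eq_cubeAvg hL,
    Measure.restrict_congr_set (cell_ae_eq hL q)]

/-- The constant in the lower bound. -/
def lowerConst (d : ℕ) (r' : ℝ) : ℝ≥0∞ := 2 * 2 ^ d * carlesonConst d r' ^ (1 / r')

lemma lowerConst_ne_top (d : ℕ) {r' : ℝ} (hr' : 1 < r') : lowerConst d r' ≠ ∞ := by
  refine ENNReal.mul_ne_top (by finiteness) (ENNReal.rpow_ne_top_of_nonneg ?_
    (carlesonConst_ne_top d hr'))
  positivity

/-- The lower bound on a single cube, from sparse domination and duality. -/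
lemma local_bound {r r' : ℝ} (hr : r.HolderConjugate r') {b : Euc d → ℂ}
    (hb : LocallyIntegrable b volume) {L : ℝ} (hL : 0 < L) (q₀ : ℕ × (Fin d → ℤ)) :
    ∫⁻ x in cell (dyKey d L) q₀, ‖b x - cubeAvg b (dyCube hL q₀)‖ₑ ^ r ≤
      (lowerConst d r' * sparseSup r' b) ^ r := by
  have hbint : IntegrableOn b (cell (dyKey d L) q₀) :=
    (hb.integrableOn_isCompact (isCompact_carrier (dyCube hL q₀))).mono_set
      (cell_subset_carrier hL q₀)
  obtain ⟨F, E, hE, hdisj, hdom⟩ := (dySystem (d := d) hL).sparse_domination q₀ hbint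
    hb.aestronglyMeasurable (ae_isLebesguePoint hL hb)
  have hinj := dyCube_injective (d := d) hL
  have hsparse : IsSparse (dyCube hL '' F) := by
    refine ⟨(to_countable F).image _, Function.extend (dyCube hL) E fun _ => ∅, ?_, ?_⟩
    · rintro _ ⟨q, hq, rfl⟩
      rw [hinj.extend_apply, ← volume_cell hL]
      exact ⟨(hE q hq).1, (hE q hq).2.1.trans (cell_subset_carrier hL q), (hE q hq).2.2⟩
    · rintro _ ⟨q, hq, rfl⟩ _ ⟨p, hp, rfl⟩ hne
      simp only [Function.onFun, hinj.extend_apply]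
      exact hdisj hq hp fun h => hne (congrArg _ h)
  set S : Euc d → ℝ≥0∞ := fun x => ∑' Q : (dyCube hL '' F),
    Q.1.carrier.indicator (fun _ => cubeOsc b Q.1 / volume Q.1.carrier) x with hS
  have hdom' : ∀ᵐ x, x ∈ cell (dyKey d L) q₀ →
      ‖b x - cubeAvg b (dyCube hL q₀)‖ₑ ^ r ≤ (2 * 2 ^ d) ^ r * S x ^ r := by
    filter_upwards [hdom] with x hx hxq
    rw [← ENNReal.mul_rpow_of_nonneg _ _ hr.nonneg, ← avg_eq_cubeAvg hL]
    refine ENNReal.rpow_le_rpow ((hx hxq).trans ?_) hr.nonneg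
    gcongr
    rw [hS]
    simp only
    rw [tsum_image (fun Q : Cube d => Q.carrier.indicator
      (fun _ => cubeOsc b Q / volume Q.carrier) x) hinj.injOn]
    refine ENNReal.tsum_le_tsum fun s => ?_
    simp only [mosc_eq hL]
    exact indicator_le_indicator_of_subset (cell_subset_carrier hL s.1) (fun _ => zero_le) x
  calc ∫⁻ x in cell (dyKey d L) q₀, ‖b x - cubeAvg b (dyCube hL q₀)‖ₑ ^ r
      ≤ ∫⁻ x in cell (dyKey d L) q₀, (2 * 2 ^ d) ^ r * S x ^ r :=
        lintegral_mono_ae ((ae_restrict_iff' (measurableSet_cell hL q₀)).2 hdom')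
    _ ≤ ∫⁻ x, (2 * 2 ^ d) ^ r * S x ^ r := setLIntegral_le_lintegral _ _
    _ = (2 * 2 ^ d) ^ r * ∫⁻ x, S x ^ r := by
        rw [lintegral_const_mul' _ _
          (ENNReal.rpow_ne_top_of_nonneg hr.nonneg (by finiteness))]
    _ ≤ (2 * 2 ^ d) ^ r * (carlesonConst d r' ^ (1 / r') * sparseSup r' b) ^ r := by
        gcongr
        exact duality_tsum hr hb hsparse
    _ = _ := by
        rw [← ENNReal.mul_rpow_of_nonneg _ _ hr.nonneg, lowerConst]
        simp only [mul_assoc]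

/-- Uniform control of `∫ |b - c n| ^ r` on sets exhausting the space passes to the whole space:
the constants `c n` stay bounded because of the control on the first set, and a limit point of
them works by Fatou's lemma. -/
lemma exhaustion {r : ℝ} (hr : 1 < r) {b : Euc d → ℂ}
    (hbm : AEStronglyMeasurable b volume) {B : ℕ → Set (Euc d)} {c : ℕ → ℂ} {M : ℝ≥0∞}
    (hBm : ∀ n, MeasurableSet (B n)) (hB0 : ∀ n, B 0 ⊆ B n) (hBpos : volume (B 0) ≠ 0)
    (hBfin : volume (B 0) ≠ ∞) (hb : IntegrableOn b (B 0))
    (hev : ∀ x, ∀ᶠ n in atTop, x ∈ B n) (hM : M ≠ ∞)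
    (h : ∀ n, ∫⁻ x in B n, ‖b x - c n‖ₑ ^ r ≤ M) :
    ∃ a : ℂ, ∫⁻ x, ‖b x - a‖ₑ ^ r ≤ M := by
  have hmeas : ∀ a : ℂ, AEMeasurable (fun x => ‖b x - a‖ₑ ^ r) volume := fun a =>
    ((hbm.sub aestronglyMeasurable_const).enorm).pow_const r
  set R : ℝ≥0∞ := volume (B 0) + M + ∫⁻ x in B 0, ‖b x‖ₑ with hR
  have hRt : R ≠ ∞ := by
    rw [hR]
    exact ENNReal.add_ne_top.2 ⟨ENNReal.add_ne_top.2 ⟨hBfin, hM⟩, hb.2.ne⟩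
  have hcb : ∀ n, ‖c n‖ₑ ≤ R / volume (B 0) := by
    intro n
    rw [ENNReal.le_div_iff_mul_le (Or.inl hBpos) (Or.inl hBfin), ← setLIntegral_const]
    calc ∫⁻ x in B 0, ‖c n‖ₑ ≤ ∫⁻ x in B 0, (1 + ‖b x - c n‖ₑ ^ r + ‖b x‖ₑ) := by
          refine lintegral_mono fun x => ?_
          have : c n = -(b x - c n) + b x := by ring
          calc ‖c n‖ₑ = ‖-(b x - c n) + b x‖ₑ := by rw [← this]
            _ ≤ ‖-(b x - c n)‖ₑ + ‖b x‖ₑ := enorm_add_le _ _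
            _ ≤ _ := by
              rw [enorm_neg]
              gcongr
              exact le_one_add_rpow hr _
      _ = volume (B 0) + (∫⁻ x in B 0, ‖b x - c n‖ₑ ^ r) + ∫⁻ x in B 0, ‖b x‖ₑ := by
          rw [lintegral_add_right' _ hb.1.enorm, lintegral_add_left measurable_const]
          simp
      _ ≤ R := by
          rw [hR]
          gcongr
          exact (lintegral_mono_set (hB0 n)).trans (h n)
  have hcb' : ∀ n, c n ∈ Metric.closedBall (0 : ℂ) (R / volume (B 0)).toReal := by
    intro n
    rw [mem_closedBall_zero_iff, ← toReal_enorm]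
    exact ENNReal.toReal_mono (ENNReal.div_ne_top hRt hBpos) (hcb n)
  obtain ⟨a, -, φ, hφ, hlim⟩ := tendsto_subseq_of_bounded Metric.isBounded_closedBall hcb'
  refine ⟨a, ?_⟩
  set f : ℕ → Euc d → ℝ≥0∞ := fun n =>
    (B (φ n)).indicator fun x => ‖b x - c (φ n)‖ₑ ^ r with hf
  have hflim : ∀ x, Tendsto (fun n => f n x) atTop (𝓝 (‖b x - a‖ₑ ^ r)) := by
    intro x
    have h1 : Tendsto (fun n => ‖b x - c (φ n)‖ₑ ^ r) atTop (𝓝 (‖b x - a‖ₑ ^ r)) :=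
      (ENNReal.continuous_rpow_const.tendsto _).comp
        ((continuous_enorm.tendsto _).comp (tendsto_const_nhds.sub hlim))
    refine h1.congr' ?_
    filter_upwards [hφ.tendsto_atTop.eventually (hev x)] with n hn
    rw [hf]
    simp only
    rw [indicator_of_mem hn]
  calc ∫⁻ x, ‖b x - a‖ₑ ^ r = ∫⁻ x, liminf (fun n => f n x) atTop :=
        lintegral_congr fun x => (hflim x).liminf_eq.symm
    _ ≤ liminf (fun n => ∫⁻ x, f n x) atTop :=
        lintegral_liminf_le' fun n => (hmeas _).indicator (hBm _)
    _ ≤ liminf (fun _ : ℕ => M) atTop := by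
        refine liminf_le_liminf (Eventually.of_forall fun n => ?_)
        simp only [hf]
        rw [lintegral_indicator (hBm _)]
        exact h _
    _ = M := liminf_const M

/-- The lower bound on the cubes `[-(n+1)/2, (n+1)/2)^d` passes to the whole space. -/
lemma exists_const_bound {r r' : ℝ} (hr : r.HolderConjugate r') {b : Euc d → ℂ}
    (hb : LocallyIntegrable b volume) (hN : sparseSup r' b ≠ ∞) :
    ∃ a : ℂ, ∫⁻ x, ‖b x - a‖ₑ ^ r ≤ (lowerConst d r' * sparseSup r' b) ^ r := by
  have hLpos : ∀ n : ℕ, (0 : ℝ) < n + 1 := fun n => by positivity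
  have hmem : ∀ (n : ℕ) (x : Euc d), x ∈ cell (dyKey d (n + 1)) (0, 0) ↔
      ∀ i, x i ∈ Ico (-((n + 1 : ℝ) / 2)) ((n + 1) / 2) := by
    intro n x
    rw [mem_cell_iff (hLpos n)]
    refine forall_congr' fun i => ?_
    have e1 : (dyCube (hLpos n) (0, 0)).center i = (0 : ℝ) := by simp [dyCube]
    have e2 : (dyCube (d := d) (hLpos n) (0, 0)).side = (n + 1 : ℝ) := by simp [dyCube]
    rw [e1, e2, zero_sub, zero_add]
  set B : ℕ → Set (Euc d) := fun n => cell (dyKey d (n + 1)) (0, 0) with hB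
  have hBm : ∀ n, MeasurableSet (B n) := fun n => measurableSet_cell (hLpos n) _
  have hB0 : ∀ n, B 0 ⊆ B n := fun n x hx => by
    refine (hmem n x).2 fun i => ?_
    have hn : (0 : ℝ) ≤ n := n.cast_nonneg
    have h1 := ((hmem 0 x).1 hx i).1
    have h2 := ((hmem 0 x).1 hx i).2
    simp only [Nat.cast_zero, zero_add] at h1 h2
    constructor <;> linarith
  have hBpos : volume (B 0) ≠ 0 := (dySystem (hLpos 0)).pos _
  have hBfin : volume (B 0) ≠ ∞ := (dySystem (hLpos 0)).fin _
  have hBint : IntegrableOn b (B 0) :=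
    (hb.integrableOn_isCompact (isCompact_carrier _)).mono_set
      (cell_subset_carrier (hLpos 0) _)
  have hev : ∀ x, ∀ᶠ n in atTop, x ∈ B n := fun x => by
    simp only [hB, hmem]
    refine eventually_all.2 fun i => ?_
    filter_upwards [eventually_ge_atTop ⌈2 * |x i|⌉₊] with n hn
    have h1 : 2 * |x i| ≤ n := (Nat.le_ceil _).trans (by exact_mod_cast hn)
    constructor <;> linarith [neg_abs_le (x i), le_abs_self (x i)]
  have hM : (lowerConst d r' * sparseSup r' b) ^ r ≠ ∞ :=
    ENNReal.rpow_ne_top_of_nonneg hr.nonneg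
      (ENNReal.mul_ne_top (lowerConst_ne_top d hr.symm.lt) hN)
  have hloc : ∀ n, ∫⁻ x in B n, ‖b x - cubeAvg b (dyCube (hLpos n) (0, 0))‖ₑ ^ r ≤
      (lowerConst d r' * sparseSup r' b) ^ r := fun n => local_bound hr hb (hLpos n) (0, 0)
  exact exhaustion hr.lt hb.aestronglyMeasurable hBm hB0 hBpos hBfin hBint hev hM hloc

lemma lower_bound {r r' : ℝ} (hr : r.HolderConjugate r') {b : Euc d → ℂ}
    (hb : LocallyIntegrable b volume) :
    dotLrNorm r b ≤ (lowerConst d r' + 1) * sparseSup r' b := by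
  rcases eq_or_ne (sparseSup r' b) ∞ with hN | hN
  · rw [hN, ENNReal.mul_top (by simp)]
    exact le_top
  obtain ⟨a, ha⟩ := exists_const_bound hr hb hN
  have hinf : dotLrNorm r b ≤ eLpNorm (fun x => b x - a) (ENNReal.ofReal r) volume := iInf_le _ a
  have h2 : eLpNorm (fun x => b x - a) (ENNReal.ofReal r) volume ≤ lowerConst d r' * sparseSup r' b := by
    rw [eLpNorm_ofReal hr.lt]
    have h := ENNReal.rpow_le_rpow ha (show 0 ≤ 1 / r by have := hr.nonneg; positivity)
    rwa [← ENNReal.rpow_mul, mul_one_div_cancel hr.ne_zero, ENNReal.rpow_one] at h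
  have h3 : lowerConst d r' * sparseSup r' b ≤ (lowerConst d r' + 1) * sparseSup r' b := by
    gcongr
    exact le_self_add
  exact hinf.trans (h2.trans h3)

end Lower

theorem statement3 (d : ℕ) (hd : 1 ≤ d) (r r' : ℝ) (hr : 1 < r) (hr' : 1 / r + 1 / r' = 1) :
    ∃ C : ℝ, 1 ≤ C ∧ ∀ b : Euc d → ℂ, MeasureTheory.LocallyIntegrable b volume →
      (∀ (𝒮 : Set (Cube d)) (lam : Cube d → ℝ), IsSparse 𝒮 → (∀ Q, 0 ≤ lam Q) →
        (∑' Q : 𝒮, ENNReal.ofReal ((volume Q.1.carrier).toReal * lam Q.1 ^ r') ≤ 1) →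
        ∑' Q : 𝒮, ENNReal.ofReal (lam Q.1 * ∫ x in Q.1.carrier, ‖b x - cubeAvg b Q.1‖)
          ≤ ENNReal.ofReal C * dotLrNorm r b) ∧
      dotLrNorm r b ≤ ENNReal.ofReal C *
        ⨆ (𝒮 : Set (Cube d)) (lam : Cube d → ℝ) (_ : IsSparse 𝒮) (_ : ∀ Q, 0 ≤ lam Q)
          (_ : ∑' Q : 𝒮, ENNReal.ofReal ((volume Q.1.carrier).toReal * lam Q.1 ^ r') ≤ 1),
          ∑' Q : 𝒮, ENNReal.ofReal (lam Q.1 * ∫ x in Q.1.carrier, ‖b x - cubeAvg b Q.1‖) := by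
  have hconj : r.HolderConjugate r' :=
    Real.holderConjugate_iff.2 ⟨hr, by simpa only [one_div] using hr'⟩
  set K : ℝ≥0∞ := 2 * carlesonConst d r ^ (1 / r) + (lowerConst d r' + 1) with hK
  have hKt : K ≠ ∞ := by
    refine ENNReal.add_ne_top.2 ⟨ENNReal.mul_ne_top (by norm_num)
      (ENNReal.rpow_ne_top_of_nonneg (by positivity) (carlesonConst_ne_top d hr)), ?_⟩
    exact ENNReal.add_ne_top.2 ⟨lowerConst_ne_top d hconj.symm.lt, one_ne_top⟩
  have h1K : 1 ≤ K := le_add_self.trans le_add_self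
  refine ⟨K.toReal, by simpa using ENNReal.toReal_mono hKt h1K, fun b hb => ?_⟩
  rw [ENNReal.ofReal_toReal hKt]
  refine ⟨fun 𝒮 lam hS hlam hsum => ?_, ?_⟩
  · refine (upper_bound hconj.symm hb hS hlam hsum).trans ?_
    gcongr
    exact le_self_add
  · refine (lower_bound hconj hb).trans ?_
    rw [sparseSup]
    gcongr
    exact le_add_self
end
end

section
/- Let d1, d2 ≥ 1, α, β > 0 and let b : ℝ^{d1}×ℝ^{d2} → ℂ be continuous. Then, with two-sided constants depending only on d1, d2, α, β, the quantity sup{ |B(x,y)| / (|x1−y1|^α |x2−y2|^β) : x1 ≠ y1 ∈ ℝ^{d1}, x2 ≠ y2 ∈ ℝ^{d2} } is comparable to sup{ ℓ(I1)^{−α} ℓ(I2)^{−β} |R|⁻¹ osc^{1,1}(b,R) : R = I1×I2 a rectangle }, both quantities possibly +∞. -/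
/-!
Both suprema are compared through the operator `(Id - E_{I1})(Id - E_{I2})`, where `E_I` is
averaging over the cube `I`; applied to `b` it gives the integrand of `osc11 b I1 I2`.

*Oscillation by difference quotients.* At `x` that integrand is the average over `y ∈ I1 × I2` of
the mixed difference `B(x, y)` (`norm_oscIntegrand_le`), and `|x_i - y_i| ≤ √d_i ℓ(I_i)` on the
rectangle.

*Difference quotients by oscillation.* Averaging the integrand over a subrectangle `J1 × J2` gives
the mixed difference `⟨b⟩_{J1×J2} - ⟨b⟩_{I1×J2} - ⟨b⟩_{J1×I2} + ⟨b⟩_{I1×I2}`, which is therefore at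
most `|J1 × J2|⁻¹ osc11 b I1 I2` (`norm_avgRect_diff_le`). Given `x1 ≠ y1`, take chains of cubes
that start from one common cube of side `4 |x1 - y1|`, halve at each step, and shrink to `x1` and to
`y1` respectively; likewise in the second variable. For each of the four corners, the mixed
difference of averages between the start and stage `K` telescopes in both parameters into a double
geometric series, convergent because `α, β > 0` (`norm_chain_diff_le`). In the alternating sum over
the corners all terms containing a starting cube cancel, and letting `K → ∞` the continuity of `b`
turns what remains into `B(x, y)` (`norm_mixedDiff_le`).
-/

open MeasureTheory ENNReal Set

noncomputable section

/-! ### Geometry of cubes -/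

namespace Cube

lemma carrier_eq_preimage {d : ℕ} (I : Cube d) :
    I.carrier = (@WithLp.ofLp 2 (Fin d → ℝ)) ⁻¹'
      Icc (fun i => I.center i - I.side / 2) (fun i => I.center i + I.side / 2) := by
  ext x
  simp only [Cube.carrier, mem_ofPred_eq, mem_preimage, mem_Icc, Pi.le_def, abs_le, ← forall_and]
  refine forall_congr' fun i => ?_
  constructor <;> rintro ⟨h1, h2⟩ <;> constructor <;> linarith

lemma isCompact_carrier {d : ℕ} (I : Cube d) : IsCompact I.carrier := by
  rw [carrier_eq_preimage]
  exact (PiLp.homeomorph 2 (fun _ : Fin d => ℝ)).isCompact_preimage.2 isCompact_Icc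

lemma measurableSet_carrier {d : ℕ} (I : Cube d) : MeasurableSet I.carrier :=
  I.isCompact_carrier.measurableSet

lemma volume_carrier {d : ℕ} (I : Cube d) :
    (volume I.carrier).toReal = I.side ^ d := by
  rw [carrier_eq_preimage, (PiLp.volume_preserving_ofLp (Fin d)).measure_preimage
    measurableSet_Icc.nullMeasurableSet, Real.volume_Icc_pi, toReal_prod]
  simp [I.side_pos.le]

lemma volume_pos {d : ℕ} (I : Cube d) : 0 < (volume I.carrier).toReal := by
  rw [volume_carrier]; exact pow_pos I.side_pos d

lemma volume_prod {d1 d2 : ℕ} (I : Cube d1) (J : Cube d2) :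
    (volume (I.carrier ×ˢ J.carrier)).toReal
      = (volume I.carrier).toReal * (volume J.carrier).toReal := by
  rw [Measure.volume_eq_prod, Measure.prod_prod, toReal_mul]

instance {d : ℕ} (I : Cube d) : IsFiniteMeasure (volume.restrict I.carrier) :=
  ⟨by simpa using I.isCompact_carrier.measure_lt_top⟩

lemma dist_le {d : ℕ} (I : Cube d) {x y : Euc d} (hx : x ∈ I.carrier) (hy : y ∈ I.carrier) :
    dist x y ≤ √d * I.side := by
  have hs := I.side_pos
  rw [EuclideanSpace.dist_eq, ← Real.sqrt_sq hs.le, ← Real.sqrt_mul (by positivity)]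
  apply Real.sqrt_le_sqrt
  calc ∑ i, dist (x i) (y i) ^ 2 ≤ ∑ _i : Fin d, I.side ^ 2 := by
        refine Finset.sum_le_sum fun i _ => ?_
        have h1 := abs_le.1 (hx i)
        have h2 := abs_le.1 (hy i)
        refine pow_le_pow_left₀ dist_nonneg ?_ 2
        rw [Real.dist_eq, abs_le]
        constructor <;> linarith [h1.1, h1.2, h2.1, h2.2]
    _ = d * I.side ^ 2 := by simp

end Cube

/-! ### Rectangular averages and the oscillation integrand -/

section Averages

variable {d1 d2 : ℕ} {b : Euc d1 × Euc d2 → ℂ}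

lemma restrict_rect (I1 : Cube d1) (I2 : Cube d2) :
    (volume : Measure (Euc d1 × Euc d2)).restrict (I1.carrier ×ˢ I2.carrier)
      = (volume.restrict I1.carrier).prod (volume.restrict I2.carrier) := by
  rw [Measure.volume_eq_prod, Measure.prod_restrict]

lemma integrableOn_rect (hb : Continuous b) (I1 : Cube d1) (I2 : Cube d2) :
    IntegrableOn b (I1.carrier ×ˢ I2.carrier) :=
  hb.continuousOn.integrableOn_compact (I1.isCompact_carrier.prod I2.isCompact_carrier)

lemma integrableOn_avgFst (hb : Continuous b) (J I1 : Cube d1) (I2 : Cube d2) :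
    IntegrableOn (fun x : Euc d1 × Euc d2 => avgFst b J x.2) (I1.carrier ×ˢ I2.carrier) := by
  have h := integrableOn_rect hb J I2
  rw [IntegrableOn, restrict_rect] at h ⊢
  exact Integrable.comp_snd (h.integral_prod_right.smul (volume J.carrier).toReal⁻¹) _

lemma integrableOn_avgSnd (hb : Continuous b) (J I2 : Cube d2) (I1 : Cube d1) :
    IntegrableOn (fun x : Euc d1 × Euc d2 => avgSnd b J x.1) (I1.carrier ×ˢ I2.carrier) := by
  have h := integrableOn_rect hb I1 J
  rw [IntegrableOn, restrict_rect] at h ⊢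
  exact Integrable.comp_fst (h.integral_prod_left.smul (volume J.carrier).toReal⁻¹) _

lemma setIntegral_avgFst (hb : Continuous b) (J I1 : Cube d1) (I2 : Cube d2) :
    ∫ x in I1.carrier ×ˢ I2.carrier, avgFst b J x.2
      = (volume (I1.carrier ×ˢ I2.carrier)).toReal • avgRect b J I2 := by
  have h := integrableOn_rect hb J I2
  rw [IntegrableOn, restrict_rect] at h
  rw [avgRect, restrict_rect, restrict_rect, integral_prod_symm _ h,
    integral_fun_snd (fun y => avgFst b J y)]
  simp only [avgFst, integral_smul, Cube.volume_prod, smul_smul, measureReal_def,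
    Measure.restrict_apply_univ]
  congr 1
  have := J.volume_pos
  have := I2.volume_pos
  field_simp

lemma setIntegral_avgSnd (hb : Continuous b) (J I2 : Cube d2) (I1 : Cube d1) :
    ∫ x in I1.carrier ×ˢ I2.carrier, avgSnd b J x.1
      = (volume (I1.carrier ×ˢ I2.carrier)).toReal • avgRect b I1 J := by
  have h := integrableOn_rect hb I1 J
  rw [IntegrableOn, restrict_rect] at h
  rw [avgRect, restrict_rect, restrict_rect, integral_prod _ h,
    integral_fun_fst (fun y => avgSnd b J y)]
  simp only [avgSnd, integral_smul, Cube.volume_prod, smul_smul, measureReal_def,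
    Measure.restrict_apply_univ]
  congr 1
  have := J.volume_pos
  have := I1.volume_pos
  field_simp

lemma setIntegral_eq_smul_avgRect (I1 : Cube d1) (I2 : Cube d2) :
    ∫ x in I1.carrier ×ˢ I2.carrier, b x
      = (volume (I1.carrier ×ˢ I2.carrier)).toReal • avgRect b I1 I2 := by
  have h1 := I1.volume_pos
  have h2 := I2.volume_pos
  rw [avgRect, smul_smul, mul_inv_cancel₀, one_smul]
  rw [Cube.volume_prod]; positivity

/-- The integrand of `osc11` on `I1 × I2` is `(Id - E_{I1})(Id - E_{I2}) b`, with `E_I`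
the averaging operators, so averaging it over a subrectangle `J1 × J2` produces a
mixed second difference of rectangular averages of `b`. -/
lemma norm_avgRect_diff_le (hb : Continuous b) {I1 J1 : Cube d1} {I2 J2 : Cube d2}
    (h1 : J1.carrier ⊆ I1.carrier) (h2 : J2.carrier ⊆ I2.carrier) :
    ‖avgRect b J1 J2 - avgRect b I1 J2 - avgRect b J1 I2 + avgRect b I1 I2‖
      ≤ (volume (J1.carrier ×ˢ J2.carrier)).toReal⁻¹ * osc11 b I1 I2 := by
  have hp1 := J1.volume_pos
  have hp2 := J2.volume_pos
  have hp : 0 < (volume (J1.carrier ×ˢ J2.carrier)).toReal := by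
    rw [Cube.volume_prod]; positivity
  have hfin : ∀ (K1 : Cube d1) (K2 : Cube d2), IntegrableOn
      (fun _ : Euc d1 × Euc d2 => avgRect b I1 I2) (K1.carrier ×ˢ K2.carrier) := fun K1 K2 =>
    continuous_const.continuousOn.integrableOn_compact
      (K1.isCompact_carrier.prod K2.isCompact_carrier)
  have hint : ∀ (K1 : Cube d1) (K2 : Cube d2), IntegrableOn
      (fun x => b x - avgFst b I1 x.2 - avgSnd b I2 x.1 + avgRect b I1 I2)
      (K1.carrier ×ˢ K2.carrier) := fun K1 K2 =>
    (((integrableOn_rect hb K1 K2).sub (integrableOn_avgFst hb I1 K1 K2)).sub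
      (integrableOn_avgSnd hb I2 K2 K1)).add (hfin K1 K2)
  have hkey : ∫ x in J1.carrier ×ˢ J2.carrier,
      (b x - avgFst b I1 x.2 - avgSnd b I2 x.1 + avgRect b I1 I2)
      = (volume (J1.carrier ×ˢ J2.carrier)).toReal •
        (avgRect b J1 J2 - avgRect b I1 J2 - avgRect b J1 I2 + avgRect b I1 I2) := by
    have i1 : IntegrableOn (fun x => b x - avgFst b I1 x.2) (J1.carrier ×ˢ J2.carrier) :=
      (integrableOn_rect hb J1 J2).sub (integrableOn_avgFst hb I1 J1 J2)
    have i2 : IntegrableOn (fun x => b x - avgFst b I1 x.2 - avgSnd b I2 x.1)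
        (J1.carrier ×ˢ J2.carrier) := i1.sub (integrableOn_avgSnd hb I2 J2 J1)
    rw [integral_add i2 (hfin J1 J2), integral_sub i1 (integrableOn_avgSnd hb I2 J2 J1),
      integral_sub (integrableOn_rect hb J1 J2) (integrableOn_avgFst hb I1 J1 J2),
      setIntegral_avgFst hb, setIntegral_avgSnd hb, setIntegral_eq_smul_avgRect,
      setIntegral_const, measureReal_def]
    simp only [smul_add, smul_sub]
  have hmono : ‖∫ x in J1.carrier ×ˢ J2.carrier,
      (b x - avgFst b I1 x.2 - avgSnd b I2 x.1 + avgRect b I1 I2)‖ ≤ osc11 b I1 I2 :=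
    (norm_integral_le_integral_norm _).trans <|
      setIntegral_mono_set (hint I1 I2).norm (Filter.Eventually.of_forall fun _ => norm_nonneg _)
        (prod_mono h1 h2).eventuallyLE
  rw [hkey, norm_smul, Real.norm_of_nonneg hp.le] at hmono
  rwa [inv_mul_eq_div, le_div_iff₀' hp]

/-- The integrand of `osc11` at `x` is the average over `y` of the mixed difference `B(x, y)`. -/
lemma norm_oscIntegrand_le (hb : Continuous b) (I1 : Cube d1) (I2 : Cube d2) {A : ℝ}
    (x : Euc d1 × Euc d2)
    (hA : ∀ y ∈ I1.carrier ×ˢ I2.carrier,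
      ‖b (x.1, x.2) - b (x.1, y.2) - b (y.1, x.2) + b (y.1, y.2)‖ ≤ A) :
    ‖b x - avgFst b I1 x.2 - avgSnd b I2 x.1 + avgRect b I1 I2‖ ≤ A := by
  have hp1 := I1.volume_pos
  have hp2 := I2.volume_pos
  have hp : 0 < (volume (I1.carrier ×ˢ I2.carrier)).toReal := by
    rw [Cube.volume_prod]; positivity
  have hK := I1.isCompact_carrier.prod I2.isCompact_carrier
  have hci : ∀ {f : Euc d1 × Euc d2 → ℂ}, Continuous f →
      IntegrableOn f (I1.carrier ×ˢ I2.carrier) := fun hf =>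
    hf.continuousOn.integrableOn_compact hK
  have hkey : ∫ y in I1.carrier ×ˢ I2.carrier,
      (b (x.1, x.2) - b (x.1, y.2) - b (y.1, x.2) + b (y.1, y.2))
      = (volume (I1.carrier ×ˢ I2.carrier)).toReal •
        (b x - avgFst b I1 x.2 - avgSnd b I2 x.1 + avgRect b I1 I2) := by
    rw [integral_add (hci (by fun_prop)) (hci (by fun_prop)),
      integral_sub (hci (by fun_prop)) (hci (by fun_prop)),
      integral_sub (hci (by fun_prop)) (hci (by fun_prop)),
      setIntegral_const, measureReal_def]
    have e1 : ∫ y in I1.carrier ×ˢ I2.carrier, b (x.1, y.2)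
        = (volume (I1.carrier ×ˢ I2.carrier)).toReal • avgSnd b I2 x.1 := by
      rw [restrict_rect, integral_fun_snd (fun y => b (x.1, y)), avgSnd, smul_smul,
        Cube.volume_prod, mul_inv_cancel_right₀ hp2.ne', measureReal_def,
        Measure.restrict_apply_univ]
    have e2 : ∫ y in I1.carrier ×ˢ I2.carrier, b (y.1, x.2)
        = (volume (I1.carrier ×ˢ I2.carrier)).toReal • avgFst b I1 x.2 := by
      rw [restrict_rect, integral_fun_fst (fun y => b (y, x.2)), avgFst, smul_smul,
        Cube.volume_prod, mul_comm (volume I1.carrier).toReal,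
        mul_inv_cancel_right₀ hp1.ne', measureReal_def, Measure.restrict_apply_univ]
    rw [e1, e2, setIntegral_eq_smul_avgRect (b := fun a => b (a.1, a.2))]
    simp only [smul_add, smul_sub, Prod.mk.eta]
    abel
  have := norm_setIntegral_le_of_norm_le_const (μ := volume) hK.measure_lt_top hA
  rw [hkey, norm_smul, Real.norm_of_nonneg hp.le, measureReal_def, mul_comm] at this
  exact le_of_mul_le_mul_right this hp

lemma osc11_le (hb : Continuous b) (I1 : Cube d1) (I2 : Cube d2) {A : ℝ}
    (hA : ∀ x ∈ I1.carrier ×ˢ I2.carrier, ∀ y ∈ I1.carrier ×ˢ I2.carrier,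
      ‖b (x.1, x.2) - b (x.1, y.2) - b (y.1, x.2) + b (y.1, y.2)‖ ≤ A) :
    osc11 b I1 I2 ≤ A * (volume (I1.carrier ×ˢ I2.carrier)).toReal := by
  have hK := I1.isCompact_carrier.prod I2.isCompact_carrier
  refine (Real.le_norm_self _).trans <| norm_setIntegral_le_of_norm_le_const hK.measure_lt_top
    fun x hx => ?_
  rw [norm_norm]
  exact norm_oscIntegrand_le hb I1 I2 x (hA x hx)

/-- Averages of `b` over rectangles shrinking to a point converge to the value there. -/
lemma tendsto_avgRect (hb : Continuous b) (J1 : ℕ → Cube d1) (J2 : ℕ → Cube d2)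
    (z1 : Euc d1) (z2 : Euc d2) (hz1 : ∀ k, z1 ∈ (J1 (k + 1)).carrier)
    (hz2 : ∀ k, z2 ∈ (J2 (k + 1)).carrier)
    (h1 : Filter.Tendsto (fun k => (J1 k).side) Filter.atTop (nhds 0))
    (h2 : Filter.Tendsto (fun k => (J2 k).side) Filter.atTop (nhds 0)) :
    Filter.Tendsto (fun k => avgRect b (J1 k) (J2 k)) Filter.atTop (nhds (b (z1, z2))) := by
  rw [Metric.tendsto_atTop']
  intro ε hε
  obtain ⟨δ, hδ, hball⟩ := Metric.continuousAt_iff.1 (hb.continuousAt (x := (z1, z2))) (ε / 2)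
    (by positivity)
  have t1 : Filter.Tendsto (fun k => √d1 * (J1 k).side) Filter.atTop (nhds 0) := by
    simpa using h1.const_mul (√d1)
  have t2 : Filter.Tendsto (fun k => √d2 * (J2 k).side) Filter.atTop (nhds 0) := by
    simpa using h2.const_mul (√d2)
  obtain ⟨N, hN⟩ := Filter.eventually_atTop.1
    ((t1.eventually (gt_mem_nhds hδ)).and (t2.eventually (gt_mem_nhds hδ)))
  refine ⟨N, fun n hn => ?_⟩
  obtain ⟨m, rfl⟩ : ∃ m, n = m + 1 := ⟨n - 1, by omega⟩
  obtain ⟨hN1, hN2⟩ := hN (m + 1) hn.le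
  have hp1 := (J1 (m + 1)).volume_pos
  have hp2 := (J2 (m + 1)).volume_pos
  have hp : 0 < (volume ((J1 (m + 1)).carrier ×ˢ (J2 (m + 1)).carrier)).toReal := by
    rw [Cube.volume_prod]; positivity
  have hK := (J1 (m + 1)).isCompact_carrier.prod (J2 (m + 1)).isCompact_carrier
  have hle : ‖∫ x in (J1 (m + 1)).carrier ×ˢ (J2 (m + 1)).carrier, (b x - b (z1, z2))‖
      ≤ ε / 2 * volume.real ((J1 (m + 1)).carrier ×ˢ (J2 (m + 1)).carrier) := by
    refine norm_setIntegral_le_of_norm_le_const hK.measure_lt_top fun x hx => ?_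
    rw [← dist_eq_norm]
    refine (hball ?_).le
    rw [Prod.dist_eq]
    exact max_lt (((J1 (m + 1)).dist_le hx.1 (hz1 m)).trans_lt hN1)
      (((J2 (m + 1)).dist_le hx.2 (hz2 m)).trans_lt hN2)
  rw [integral_sub (integrableOn_rect hb _ _)
    (continuous_const.continuousOn.integrableOn_compact hK), setIntegral_eq_smul_avgRect,
    setIntegral_const, measureReal_def, ← smul_sub, norm_smul, Real.norm_of_nonneg hp.le,
    mul_comm] at hle
  rw [dist_eq_norm]
  linarith [le_of_mul_le_mul_right hle hp]

end Averages

/-! ### Halving chains of cubes and double telescoping -/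

/-- Cubes halving in size at each step: the first one is centred at `c`, all later ones at `z`.
Two such chains with a common `c` start from the same cube and shrink to different points. -/
def cubeChain {d : ℕ} (c z : Euc d) (s : ℝ) (hs : 0 < s) (k : ℕ) : Cube d where
  center := if k = 0 then c else z
  side := s * (1 / 2) ^ k
  side_pos := by positivity

lemma cubeChain_zero {d : ℕ} (c z z' : Euc d) (s : ℝ) (hs : 0 < s) :
    cubeChain c z s hs 0 = cubeChain c z' s hs 0 := by
  simp [cubeChain]

lemma mem_cubeChain {d : ℕ} (c z : Euc d) (s : ℝ) (hs : 0 < s) (k : ℕ) :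
    z ∈ (cubeChain c z s hs (k + 1)).carrier := by
  intro i
  simp only [cubeChain, Nat.add_eq_zero_iff, one_ne_zero, and_false, if_false, sub_self, abs_zero]
  positivity

lemma cubeChain_subset {d : ℕ} {c z : Euc d} {s : ℝ} (hs : 0 < s) (h : dist z c ≤ s / 4) (k : ℕ) :
    (cubeChain c z s hs (k + 1)).carrier ⊆ (cubeChain c z s hs k).carrier := by
  intro x hx i
  have hxi := hx i
  simp only [cubeChain, Nat.add_eq_zero_iff, one_ne_zero, and_false, if_false] at hxi ⊢
  rcases k with _ | k
  · have hi : |z i - c i| ≤ s / 4 := by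
      have := PiLp.norm_apply_le (z - c) i
      rw [← dist_eq_norm] at this
      exact this.trans h
    have := abs_sub_le (x i) (z i) (c i)
    norm_num at hxi ⊢
    linarith
  · have hp : 0 < s * (1 / 2) ^ (k + 1) := by positivity
    rw [pow_succ] at hxi
    simp only [Nat.add_eq_zero_iff, one_ne_zero, and_false, if_false]
    linarith

lemma tendsto_cubeChain_side {d : ℕ} (c z : Euc d) (s : ℝ) (hs : 0 < s) :
    Filter.Tendsto (fun k => (cubeChain c z s hs k).side) Filter.atTop (nhds 0) := by
  simpa [cubeChain] using
    (tendsto_pow_atTop_nhds_zero_of_lt_one (r := (1 / 2 : ℝ)) (by norm_num)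
      (by norm_num)).const_mul s

lemma volume_cubeChain {d : ℕ} (c z : Euc d) (s : ℝ) (hs : 0 < s) (k : ℕ) :
    (volume (cubeChain c z s hs (k + 1)).carrier).toReal⁻¹
      = 2 ^ d * (volume (cubeChain c z s hs k).carrier).toReal⁻¹ := by
  rw [Cube.volume_carrier, Cube.volume_carrier]
  simp only [cubeChain, pow_succ, ← mul_assoc]
  rw [mul_pow _ (1 / 2 : ℝ), mul_inv, ← inv_pow (1 / 2 : ℝ)]
  norm_num [mul_comm]

lemma telescope_two (a : ℕ → ℕ → ℂ) (K L : ℕ) :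
    a K L - a 0 L - a K 0 + a 0 0
      = ∑ k ∈ Finset.range K, ∑ l ∈ Finset.range L,
        (a (k + 1) (l + 1) - a k (l + 1) - a (k + 1) l + a k l) := by
  have h : ∀ k, ∑ l ∈ Finset.range L, (a (k + 1) (l + 1) - a k (l + 1) - a (k + 1) l + a k l)
      = (a (k + 1) L - a (k + 1) 0) - (a k L - a k 0) := fun k => by
    rw [← Finset.sum_range_sub (fun l => a (k + 1) l), ← Finset.sum_range_sub (fun l => a k l),
      ← Finset.sum_sub_distrib]
    exact Finset.sum_congr rfl fun l _ => by ring
  simp only [h]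
  rw [Finset.sum_range_sub (fun k => a k L - a k 0)]
  ring

lemma sum_rpow_le {s γ : ℝ} (hs : 0 < s) (hγ : 0 < γ) (K : ℕ) :
    ∑ k ∈ Finset.range K, (s * (1 / 2) ^ k) ^ γ ≤ s ^ γ * (1 - (1 / 2 : ℝ) ^ γ)⁻¹ := by
  have h0 : (0 : ℝ) ≤ (1 / 2 : ℝ) ^ γ := by positivity
  have h1 : (1 / 2 : ℝ) ^ γ < 1 := Real.rpow_lt_one (by norm_num) (by norm_num) hγ
  have he : ∀ k : ℕ, (s * (1 / 2) ^ k) ^ γ = s ^ γ * ((1 / 2 : ℝ) ^ γ) ^ k := fun k => by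
    rw [Real.mul_rpow hs.le (by positivity), ← Real.rpow_natCast, ← Real.rpow_natCast,
      ← Real.rpow_mul (by norm_num), ← Real.rpow_mul (by norm_num), mul_comm γ]
  simp only [he]
  rw [← Finset.mul_sum, ← tsum_geometric_of_lt_one h0 h1]
  gcongr
  exact (summable_geometric_of_lt_one h0 h1).sum_le_tsum _ fun _ _ => by positivity

/-! ### The two estimates -/

section MainEstimates

variable {d1 d2 : ℕ} {b : Euc d1 × Euc d2 → ℂ}

/-- Telescoping along both chains, each elementary difference being controlled by one
oscillation; the resulting double geometric series is summable since the exponents are positive. -/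
lemma norm_chain_diff_le (hb : Continuous b) {α β M : ℝ} (hα : 0 < α) (hβ : 0 < β) (hM0 : 0 ≤ M)
    (hM : ∀ (I1 : Cube d1) (I2 : Cube d2),
      (volume (I1.carrier ×ˢ I2.carrier)).toReal⁻¹ * osc11 b I1 I2
        ≤ M * (I1.side ^ α * I2.side ^ β))
    {c1 z1 : Euc d1} {c2 z2 : Euc d2} {s1 s2 : ℝ} (hs1 : 0 < s1) (hs2 : 0 < s2)
    (h1 : dist z1 c1 ≤ s1 / 4) (h2 : dist z2 c2 ≤ s2 / 4) (K : ℕ) :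
    ‖avgRect b (cubeChain c1 z1 s1 hs1 K) (cubeChain c2 z2 s2 hs2 K)
      - avgRect b (cubeChain c1 z1 s1 hs1 0) (cubeChain c2 z2 s2 hs2 K)
      - avgRect b (cubeChain c1 z1 s1 hs1 K) (cubeChain c2 z2 s2 hs2 0)
      + avgRect b (cubeChain c1 z1 s1 hs1 0) (cubeChain c2 z2 s2 hs2 0)‖
    ≤ 2 ^ d1 * 2 ^ d2 * M * ((s1 ^ α * (1 - (1 / 2 : ℝ) ^ α)⁻¹)
        * (s2 ^ β * (1 - (1 / 2 : ℝ) ^ β)⁻¹)) := by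
  rw [telescope_two (fun k l => avgRect b (cubeChain c1 z1 s1 hs1 k) (cubeChain c2 z2 s2 hs2 l))]
  calc _ ≤ ∑ k ∈ Finset.range K, ∑ l ∈ Finset.range K, 2 ^ d1 * 2 ^ d2 * M *
        ((s1 * (1 / 2) ^ k) ^ α * (s2 * (1 / 2) ^ l) ^ β) := by
        refine (norm_sum_le _ _).trans (Finset.sum_le_sum fun k _ => ?_)
        refine (norm_sum_le _ _).trans (Finset.sum_le_sum fun l _ => ?_)
        refine (norm_avgRect_diff_le hb (cubeChain_subset hs1 h1 k)
          (cubeChain_subset hs2 h2 l)).trans ?_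
        have := hM (cubeChain c1 z1 s1 hs1 k) (cubeChain c2 z2 s2 hs2 l)
        rw [Cube.volume_prod, mul_inv] at this ⊢
        rw [volume_cubeChain, volume_cubeChain]
        calc _ = 2 ^ d1 * 2 ^ d2 * ((volume (cubeChain c1 z1 s1 hs1 k).carrier).toReal⁻¹ *
              (volume (cubeChain c2 z2 s2 hs2 l).carrier).toReal⁻¹ *
              osc11 b (cubeChain c1 z1 s1 hs1 k) (cubeChain c2 z2 s2 hs2 l)) := by ring
          _ ≤ 2 ^ d1 * 2 ^ d2 * (M * ((s1 * (1 / 2) ^ k) ^ α * (s2 * (1 / 2) ^ l) ^ β)) := 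
              mul_le_mul_of_nonneg_left this (by positivity)
          _ = _ := by ring
    _ = 2 ^ d1 * 2 ^ d2 * M * ((∑ k ∈ Finset.range K, (s1 * (1 / 2) ^ k) ^ α) *
          ∑ l ∈ Finset.range K, (s2 * (1 / 2) ^ l) ^ β) := by
        rw [Finset.sum_mul_sum, Finset.mul_sum]
        simp only [Finset.mul_sum]
    _ ≤ _ := by
        have hg : 0 ≤ (1 - (1 / 2 : ℝ) ^ α)⁻¹ := inv_nonneg.2 (sub_nonneg.2
          (Real.rpow_lt_one (by norm_num) (by norm_num) hα).le)
        gcongr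
        · exact sum_rpow_le hs1 hα K
        · exact sum_rpow_le hs2 hβ K

/-- The passage to the limit along four chains, one for each corner. The starting side
`4 * dist` makes the first halved cube around either endpoint fit into the common starting cube. -/
lemma norm_mixedDiff_le (hb : Continuous b) {α β M : ℝ} (hα : 0 < α) (hβ : 0 < β) (hM0 : 0 ≤ M)
    (hM : ∀ (I1 : Cube d1) (I2 : Cube d2),
      (volume (I1.carrier ×ˢ I2.carrier)).toReal⁻¹ * osc11 b I1 I2
        ≤ M * (I1.side ^ α * I2.side ^ β))
    {x1 y1 : Euc d1} {x2 y2 : Euc d2} (h1 : x1 ≠ y1) (h2 : x2 ≠ y2) :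
    ‖b (x1, x2) - b (x1, y2) - b (y1, x2) + b (y1, y2)‖
      ≤ 4 * (2 ^ d1 * 2 ^ d2 * M * (((4 * dist x1 y1) ^ α * (1 - (1 / 2 : ℝ) ^ α)⁻¹)
        * ((4 * dist x2 y2) ^ β * (1 - (1 / 2 : ℝ) ^ β)⁻¹))) := by
  have hs1 : 0 < 4 * dist x1 y1 := by have := dist_pos.2 h1; positivity
  have hs2 : 0 < 4 * dist x2 y2 := by have := dist_pos.2 h2; positivity
  have hx1 : dist x1 x1 ≤ 4 * dist x1 y1 / 4 := by rw [dist_self]; positivity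
  have hx2 : dist x2 x2 ≤ 4 * dist x2 y2 / 4 := by rw [dist_self]; positivity
  have hy1 : dist y1 x1 ≤ 4 * dist x1 y1 / 4 := by rw [dist_comm]; linarith
  have hy2 : dist y2 x2 ≤ 4 * dist x2 y2 / 4 := by rw [dist_comm]; linarith
  have T : ∀ z1 z2, Filter.Tendsto (fun k => avgRect b (cubeChain x1 z1 _ hs1 k)
      (cubeChain x2 z2 _ hs2 k)) Filter.atTop (nhds (b (z1, z2))) := fun z1 z2 =>
    tendsto_avgRect hb _ _ z1 z2 (mem_cubeChain x1 z1 _ hs1) (mem_cubeChain x2 z2 _ hs2)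
      (tendsto_cubeChain_side _ _ _ _) (tendsto_cubeChain_side _ _ _ _)
  refine le_of_tendsto ((((T x1 x2).sub (T x1 y2)).sub (T y1 x2)).add (T y1 y2)).norm
    (Filter.Eventually.of_forall fun K => ?_)
  have e1 := norm_chain_diff_le hb hα hβ hM0 hM hs1 hs2 hx1 hx2 K
  have e2 := norm_chain_diff_le hb hα hβ hM0 hM hs1 hs2 hx1 hy2 K
  have e3 := norm_chain_diff_le hb hα hβ hM0 hM hs1 hs2 hy1 hx2 K
  have e4 := norm_chain_diff_le hb hα hβ hM0 hM hs1 hs2 hy1 hy2 K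
  rw [cubeChain_zero x1 y1 x1] at e3 e4
  rw [cubeChain_zero x2 y2 x2] at e2 e4
  -- The terms involving the common initial cubes cancel in the alternating sum over the corners.
  have key : ∀ p q r t p' q' u v w : ℂ, ∀ A : ℝ, ‖p - u - p' + w‖ ≤ A → ‖q - v - p' + w‖ ≤ A →
      ‖r - u - q' + w‖ ≤ A → ‖t - v - q' + w‖ ≤ A → ‖p - q - r + t‖ ≤ 4 * A := by
    intro p q r t p' q' u v w A a1 a2 a3 a4
    have : p - q - r + t = (p - u - p' + w) - (q - v - p' + w) - (r - u - q' + w)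
        + (t - v - q' + w) := by ring
    rw [this]
    refine (norm_add_le _ _).trans ?_
    have := norm_sub_le ((p - u - p' + w) - (q - v - p' + w)) (r - u - q' + w)
    have := norm_sub_le (p - u - p' + w) (q - v - p' + w)
    linarith
  exact key _ _ _ _ _ _ _ _ _ _ e1 e2 e3 e4

lemma normalized_osc_le (hb : Continuous b) {α β N : ℝ} (hα : 0 < α) (hβ : 0 < β) (hN0 : 0 ≤ N)
    (hN : ∀ (x1 y1 : Euc d1) (x2 y2 : Euc d2), x1 ≠ y1 → x2 ≠ y2 →
      ‖b (x1, x2) - b (x1, y2) - b (y1, x2) + b (y1, y2)‖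
        ≤ N * (dist x1 y1 ^ α * dist x2 y2 ^ β))
    (I1 : Cube d1) (I2 : Cube d2) :
    (I1.side ^ α)⁻¹ * (I2.side ^ β)⁻¹ *
      (volume (I1.carrier ×ˢ I2.carrier)).toReal⁻¹ * osc11 b I1 I2
      ≤ ((√d1) ^ α * (√d2) ^ β) * N := by
  have hs1 := I1.side_pos
  have hs2 := I2.side_pos
  have hp1 := I1.volume_pos
  have hp2 := I2.volume_pos
  have hp : 0 < (volume (I1.carrier ×ˢ I2.carrier)).toReal := by
    rw [Cube.volume_prod]; positivity
  have h := osc11_le hb I1 I2 (A := N * ((√d1 * I1.side) ^ α * (√d2 * I2.side) ^ β)) <| by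
    rintro ⟨x1, x2⟩ ⟨hx1, hx2⟩ ⟨y1, y2⟩ ⟨hy1, hy2⟩
    simp only
    by_cases e1 : x1 = y1
    · subst e1; simp; positivity
    by_cases e2 : x2 = y2
    · subst e2; simp; positivity
    refine (hN x1 y1 x2 y2 e1 e2).trans ?_
    gcongr
    · exact I1.dist_le hx1 hy1
    · exact I2.dist_le hx2 hy2
  rw [Real.mul_rpow (by positivity) hs1.le, Real.mul_rpow (by positivity) hs2.le] at h
  have ha : 0 < I1.side ^ α := by positivity
  have hb' : 0 < I2.side ^ β := by positivity
  rw [← mul_inv, ← mul_inv, inv_mul_le_iff₀ (by positivity)]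
  calc _ ≤ _ := h
    _ = _ := by ring

end MainEstimates

theorem statement4 (d1 d2 : ℕ) (hd1 : 1 ≤ d1) (hd2 : 1 ≤ d2) (α β : ℝ) (hα : 0 < α) (hβ : 0 < β) :
    ∃ C : ℝ, 1 ≤ C ∧ ∀ b : Euc d1 × Euc d2 → ℂ, Continuous b →
      (ENNReal.ofReal C)⁻¹ *
          (⨆ (I1 : Cube d1) (I2 : Cube d2), ENNReal.ofReal
            ((I1.side ^ α)⁻¹ * (I2.side ^ β)⁻¹ *
              (volume (I1.carrier ×ˢ I2.carrier)).toReal⁻¹ * osc11 b I1 I2))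
        ≤ (⨆ (x1 : Euc d1) (y1 : Euc d1) (x2 : Euc d2) (y2 : Euc d2) (_ : x1 ≠ y1) (_ : x2 ≠ y2),
            ENNReal.ofReal (‖b (x1, x2) - b (x1, y2) - b (y1, x2) + b (y1, y2)‖ /
              (dist x1 y1 ^ α * dist x2 y2 ^ β))) ∧
      (⨆ (x1 : Euc d1) (y1 : Euc d1) (x2 : Euc d2) (y2 : Euc d2) (_ : x1 ≠ y1) (_ : x2 ≠ y2),
          ENNReal.ofReal (‖b (x1, x2) - b (x1, y2) - b (y1, x2) + b (y1, y2)‖ /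
            (dist x1 y1 ^ α * dist x2 y2 ^ β)))
        ≤ ENNReal.ofReal C *
          (⨆ (I1 : Cube d1) (I2 : Cube d2), ENNReal.ofReal
            ((I1.side ^ α)⁻¹ * (I2.side ^ β)⁻¹ *
              (volume (I1.carrier ×ˢ I2.carrier)).toReal⁻¹ * osc11 b I1 I2)) := by
  set Gα := (1 - (1 / 2 : ℝ) ^ α)⁻¹
  set Gβ := (1 - (1 / 2 : ℝ) ^ β)⁻¹
  have hGα : 0 ≤ Gα := inv_nonneg.2 (sub_nonneg.2
    (Real.rpow_lt_one (by norm_num) (by norm_num) hα).le)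
  have hGβ : 0 ≤ Gβ := inv_nonneg.2 (sub_nonneg.2
    (Real.rpow_lt_one (by norm_num) (by norm_num) hβ).le)
  set C1 : ℝ := (√d1) ^ α * (√d2) ^ β
  set C2 : ℝ := 4 * (2 ^ d1 * 2 ^ d2 * (4 ^ α * Gα * (4 ^ β * Gβ)))
  have hC1 : 0 ≤ C1 := by positivity
  have hC2 : 0 ≤ C2 := by positivity
  refine ⟨1 + C1 + C2, by linarith, fun b hb => ⟨?_, ?_⟩⟩
  · have hC0 : ENNReal.ofReal (1 + C1 + C2) ≠ 0 := by
      rw [Ne, ENNReal.ofReal_eq_zero]; linarith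
    rw [ENNReal.inv_mul_le_iff hC0 ofReal_ne_top]
    set S : ℝ≥0∞ := ⨆ (x1 : Euc d1) (y1 : Euc d1) (x2 : Euc d2) (y2 : Euc d2) (_ : x1 ≠ y1)
      (_ : x2 ≠ y2), ENNReal.ofReal (‖b (x1, x2) - b (x1, y2) - b (y1, x2) + b (y1, y2)‖ /
              (dist x1 y1 ^ α * dist x2 y2 ^ β)) with hS
    by_cases hfin : S = ∞
    · rw [hfin, ENNReal.mul_top hC0]; exact le_top
    have hN : ∀ (x1 y1 : Euc d1) (x2 y2 : Euc d2), x1 ≠ y1 → x2 ≠ y2 →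
        ‖b (x1, x2) - b (x1, y2) - b (y1, x2) + b (y1, y2)‖
          ≤ S.toReal * (dist x1 y1 ^ α * dist x2 y2 ^ β) := by
      intro x1 y1 x2 y2 h1 h2
      have hd1 := dist_pos.2 h1
      have hd2 := dist_pos.2 h2
      rw [← div_le_iff₀ (by positivity), ← ENNReal.ofReal_le_iff_le_toReal hfin, hS]
      exact le_iSup_of_le x1 <| le_iSup_of_le y1 <| le_iSup_of_le x2 <| le_iSup_of_le y2 <|
        le_iSup_of_le h1 <| le_iSup_of_le h2 le_rfl
    refine iSup_le fun I1 => iSup_le fun I2 => ?_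
    rw [← ENNReal.ofReal_toReal hfin, ← ENNReal.ofReal_mul (by positivity)]
    refine ENNReal.ofReal_le_ofReal ((normalized_osc_le hb hα hβ toReal_nonneg hN I1 I2).trans ?_)
    have : 0 ≤ S.toReal := toReal_nonneg
    gcongr
    linarith
  · have hC0 : ENNReal.ofReal (1 + C1 + C2) ≠ 0 := by
      rw [Ne, ENNReal.ofReal_eq_zero]; linarith
    set S : ℝ≥0∞ := ⨆ (I1 : Cube d1) (I2 : Cube d2), ENNReal.ofReal
            ((I1.side ^ α)⁻¹ * (I2.side ^ β)⁻¹ *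
              (volume (I1.carrier ×ˢ I2.carrier)).toReal⁻¹ * osc11 b I1 I2) with hS
    by_cases hfin : S = ∞
    · rw [hfin, ENNReal.mul_top hC0]; exact le_top
    have hM : ∀ (I1 : Cube d1) (I2 : Cube d2),
        (volume (I1.carrier ×ˢ I2.carrier)).toReal⁻¹ * osc11 b I1 I2
          ≤ S.toReal * (I1.side ^ α * I2.side ^ β) := by
      intro I1 I2
      have hs1 := I1.side_pos
      have hs2 := I2.side_pos
      rw [mul_comm S.toReal, ← inv_mul_le_iff₀ (by positivity), mul_inv, ← mul_assoc,
        ← ENNReal.ofReal_le_iff_le_toReal hfin, hS]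
      exact le_iSup_of_le I1 <| le_iSup_of_le I2 le_rfl
    refine iSup_le fun x1 => iSup_le fun y1 => iSup_le fun x2 => iSup_le fun y2 =>
      iSup_le fun h1 => iSup_le fun h2 => ?_
    rw [← ENNReal.ofReal_toReal hfin, ← ENNReal.ofReal_mul (by positivity)]
    refine ENNReal.ofReal_le_ofReal ?_
    have hd1 := dist_pos.2 h1
    have hd2 := dist_pos.2 h2
    have h0 : 0 ≤ S.toReal := toReal_nonneg
    rw [div_le_iff₀ (by positivity)]
    refine (norm_mixedDiff_le hb hα hβ h0 hM h1 h2).trans ?_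
    rw [Real.mul_rpow (by norm_num) hd1.le, Real.mul_rpow (by norm_num) hd2.le]
    calc _ = C2 * S.toReal * (dist x1 y1 ^ α * dist x2 y2 ^ β) := by ring
      _ ≤ _ := by
        gcongr
        linarith
end
end
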